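/- arXiv:0810.3892 — 4 statements merged into one kernel-verified Lean document; each statement's English description precedes it below -/
import Mathlib

section
/- Let n ≥ 2 and let τ ∈ Sₙ be the transposition (1 2). Then the action of τ - 1 on the k-th exterior power of the permutation representation ℂⁿ of Sₙ equals the sum over positions 1 ≤ p ≤ k of id ∧ ... ∧ (τ-1) ∧ ... ∧ id (with τ-1 in the p-th factor); that is, τ - 1 acts as a derivation ('Lie-algebra-like' element) on ⋀ᵏ ℂⁿ. -/
open ExteriorAlgebra

/-- The linear action of a permutation `σ` on `ℂⁿ`, permuting coordinates. -/
noncomputable def permLin {n : ℕ} (σ : Equiv.Perm (Fin n)) :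
    (Fin n → ℂ) →ₗ[ℂ] (Fin n → ℂ) :=
  LinearMap.funLeft ℂ ℂ ⇑σ⁻¹

/-!
The transposition `τ = (i j)` is a rank-one perturbation of the identity: `τ - 1` maps `ℂⁿ` into
the line spanned by `eᵢ - eⱼ`. Expanding `τv₁ ∧ ⋯ ∧ τvₖ` with `τvₚ = vₚ + (τ - 1)vₚ`, every term
with at least two factors from this line vanishes, so only the terms of order zero and one remain.
-/

theorem alternatingMap_eq_zero_of_mem_span_singleton {R M N ι : Type*} [Semiring R]
    [AddCommMonoid M] [Module R M] [AddCommMonoid N] [Module R N] (f : M [⋀^ι]→ₗ[R] N)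
    {v : ι → M} {w : M} {i j : ι} (hij : i ≠ j)
    (hi : v i ∈ Submodule.span R {w}) (hj : v j ∈ Submodule.span R {w}) : f v = 0 := by
  classical
  obtain ⟨a, ha⟩ := Submodule.mem_span_singleton.mp hi
  obtain ⟨b, hb⟩ := Submodule.mem_span_singleton.mp hj
  have hv : v = Function.update (Function.update v i (a • w)) j (b • w) := by
    rw [ha, hb, Function.update_eq_self, Function.update_eq_self]
  rw [hv, f.map_update_smul, Function.update_comm hij, f.map_update_smul,
    f.map_update_update v hij.symm, smul_zero, smul_zero]

theorem alternatingMap_add_of_mem_span_singleton {R M N ι : Type*} [Semiring R]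
    [AddCommGroup M] [Module R M] [AddCommGroup N] [Module R N] [Fintype ι] [DecidableEq ι]
    (f : M [⋀^ι]→ₗ[R] N) (v : ι → M) {h : ι → M} {w : M}
    (hw : ∀ i, h i ∈ Submodule.span R {w}) :
    f (v + h) = f v + ∑ i, f (Function.update v i (h i)) := by
  have higher_order_eq_zero (s : Finset ι) (hs : 2 ≤ s.card) : f (s.piecewise h v) = 0 := by
    obtain ⟨i, hi, j, hj, hij⟩ := Finset.one_lt_card.mp hs
    apply alternatingMap_eq_zero_of_mem_span_singleton f hij (w := w)
    · simpa only [Finset.piecewise_eq_of_mem _ _ _ hi] using hw i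
    · simpa only [Finset.piecewise_eq_of_mem _ _ _ hj] using hw j
  calc f (v + h)
      = f v + f.toMultilinearMap.linearDeriv v h
          + ∑ s : Finset ι with 2 ≤ s.card, f (s.piecewise h v) :=
        f.toMultilinearMap.map_add_eq_map_add_linearDeriv_add v h
    _ = f v + f.toMultilinearMap.linearDeriv v h := by
        rw [Finset.sum_eq_zero fun s hs ↦ higher_order_eq_zero s (Finset.mem_filter.mp hs).2,
          add_zero]
    _ = f v + ∑ i, f (Function.update v i (h i)) := by
        rw [MultilinearMap.linearDeriv_apply]
        rfl

theorem comp_swap_sub_self {R ι : Type*} [Ring R] [DecidableEq ι] (x : ι → R) (i j : ι) :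
    x ∘ Equiv.swap i j - x = (x j - x i) • (Pi.single i 1 - Pi.single j 1) := by
  ext l
  rcases eq_or_ne l i with rfl | hi
  · rcases eq_or_ne l j with rfl | hj <;> simp [*]
  · rcases eq_or_ne l j with rfl | hj <;> simp [*, Equiv.swap_apply_of_ne_of_ne]

theorem permLin_swap_sub_self_mem_span {n : ℕ} (i j : Fin n) (x : Fin n → ℂ) :
    permLin (Equiv.swap i j) x - x ∈
      Submodule.span ℂ {(Pi.single i 1 - Pi.single j 1 : Fin n → ℂ)} :=
  Submodule.mem_span_singleton.mpr ⟨x j - x i, (comp_swap_sub_self x i j).symm⟩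

theorem transposition_sub_one_is_lie_algebra_like_general {R M : Type*} [CommRing R]
    [AddCommGroup M] [Module R M] (k : ℕ) (T : M →ₗ[R] M) {w : M}
    (hT : ∀ x, T x - x ∈ Submodule.span R {w}) (v : Fin k → M) :
    ExteriorAlgebra.map T (ιMulti R k v) - ιMulti R k v
      = ∑ p : Fin k, ιMulti R k (Function.update v p (T (v p) - v p)) := by
  have hTv : T ∘ v = v + fun p ↦ T (v p) - v p := (add_sub_cancel v (T ∘ v)).symm
  rw [map_apply_ιMulti, hTv,
    alternatingMap_add_of_mem_span_singleton (ιMulti R k) v fun p ↦ hT (v p),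
    add_sub_cancel_left]

/-- Let `τ = (1 2) ∈ Sₙ` act on `ℂⁿ` by permuting coordinates, with `T` the corresponding
linear map.  Then on the `k`-th exterior power the operator `(⋀ᵏτ) - id` acts as a
derivation:  `(⋀ᵏτ)(v₁∧⋯∧v_k) - v₁∧⋯∧v_k = Σ_p v₁∧⋯∧(τ-1)v_p∧⋯∧v_k`. -/
theorem transposition_sub_one_is_lie_algebra_like (n k : ℕ) (hn : 2 ≤ n)
    (T : (Fin n → ℂ) →ₗ[ℂ] (Fin n → ℂ))
    (hT : T = permLin (Equiv.swap (⟨0, by omega⟩ : Fin n) ⟨1, by omega⟩))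
    (v : Fin k → (Fin n → ℂ)) :
    ExteriorAlgebra.map T (ιMulti ℂ k v) - ιMulti ℂ k v
      = ∑ p : Fin k, ιMulti ℂ k (Function.update v p (T (v p) - v p)) := by
  subst hT
  exact transposition_sub_one_is_lie_algebra_like_general k _
    (permLin_swap_sub_self_mem_span _ _) v
end

section
/- For every n-cycle σ in the symmetric group Sₙ and every 0 ≤ k ≤ n-1, the character of σ on the irreducible representation ⋀ᵏ V, where V is the (n-1)-dimensional standard representation of Sₙ, equals (-1)ᵏ. -/
open Finset ExteriorAlgebra

/-- The sum-of-coordinates functional on `ℂⁿ`. -/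
noncomputable def sumL (n : ℕ) : (Fin n → ℂ) →ₗ[ℂ] ℂ :=
  { toFun := fun x => ∑ i, x i
    map_add' := by intro x y; simp [Finset.sum_add_distrib]
    map_smul' := by intro c x; simp [Finset.mul_sum] }

/-- The standard representation `V = {x ∈ ℂⁿ : Σ xᵢ = 0}` of `Sₙ`. -/
noncomputable def Vsub (n : ℕ) : Submodule ℂ (Fin n → ℂ) := LinearMap.ker (sumL n)

lemma permLin_mem {n : ℕ} (σ : Equiv.Perm (Fin n)) :
    ∀ x ∈ Vsub n, permLin σ x ∈ Vsub n := by
  intro x hx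
  simp only [Vsub, LinearMap.mem_ker] at hx ⊢
  have h : sumL n (permLin σ x) = ∑ i, x (σ⁻¹ i) := rfl
  rw [h, Equiv.sum_comp σ⁻¹ x]
  exact hx

/-- The action of a permutation on `V`. -/
noncomputable def permV {n : ℕ} (σ : Equiv.Perm (Fin n)) : Vsub n →ₗ[ℂ] Vsub n :=
  (permLin σ).restrict (permLin_mem σ)

lemma extMap_mem {n k : ℕ} (f : Vsub n →ₗ[ℂ] Vsub n) :
    ∀ x ∈ ⋀[ℂ]^k (Vsub n), (ExteriorAlgebra.map f).toLinearMap x ∈ ⋀[ℂ]^k (Vsub n) := by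
  intro x hx
  rw [← ExteriorAlgebra.ιMulti_span_fixedDegree] at hx ⊢
  have h2 := Submodule.apply_mem_span_image_of_mem_span
    (ExteriorAlgebra.map f).toLinearMap hx
  refine Submodule.span_mono ?_ h2
  rintro y ⟨z, ⟨vv, rfl⟩, rfl⟩
  exact ⟨f ∘ vv, (ExteriorAlgebra.map_apply_ιMulti f vv).symm⟩

set_option synthInstance.maxHeartbeats 1000000 in
/-- The operator induced on the `k`-th exterior power `⋀ᵏV` by an operator on `V`. -/
noncomputable def extMap (n k : ℕ) (f : Vsub n →ₗ[ℂ] Vsub n) :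
    ⋀[ℂ]^k (Vsub n) →ₗ[ℂ] ⋀[ℂ]^k (Vsub n) :=
  (ExteriorAlgebra.map f).toLinearMap.restrict (extMap_mem f)

/-!
For an endomorphism `f` of a free module, the trace of `⋀ᵏ f` is the sum of the principal `k`-minors
of `f`, that is, up to the sign `(-1)ᵏ` a coefficient of the characteristic polynomial. So it
suffices to show that the characteristic polynomial `χ` of an `n`-cycle `σ` on `V` is
`1 + X + ⋯ + Xⁿ⁻¹`.

The basis vector `eᵢ` of the permutation module is cyclic for `σ`: the vectors
`eᵢ, e_{σ i}, …, e_{σⁿ⁻¹ i}` form a basis. Hence `Xⁿ - 1` is the only monic polynomial `p` of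
degree `n` with `p(σ) eᵢ = 0`. As `(σ - 1) eᵢ = e_{σ i} - eᵢ` lies in `V`, Cayley–Hamilton says
that `χ(σ)` kills it, whence `χ · (X - 1) = Xⁿ - 1`. No division is involved, so the argument is
valid over every commutative ring.
-/

open Polynomial

section Endomorphism

variable {R M N : Type*} [CommRing R] [AddCommGroup M] [Module R M] [AddCommGroup N] [Module R N]

lemma toMatrix_exteriorPower_map {ι κ : Type*} [Fintype ι] [LinearOrder ι] [Finite κ]
    [LinearOrder κ] (b : Module.Basis ι R M) (c : Module.Basis κ R N) (f : M →ₗ[R] N) {k : ℕ}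
    (s : Set.powersetCard κ k) (t : Set.powersetCard ι k) :
    LinearMap.toMatrix (b.exteriorPower k) (c.exteriorPower k) (exteriorPower.map k f) s t =
      ((LinearMap.toMatrix b c f).submatrix (Set.powersetCard.ofFinEmbEquiv.symm s)
        (Set.powersetCard.ofFinEmbEquiv.symm t)).det := by
  rw [LinearMap.toMatrix_apply, exteriorPower.basis_apply, exteriorPower.map_apply_ιMulti_family,
    exteriorPower.basis_repr_apply, exteriorPower.ιMulti_family,
    exteriorPower.ιMultiDual_apply_ιMulti, ← Matrix.det_transpose]
  congr 1
  ext i j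
  simp [LinearMap.toMatrix_apply]

lemma trace_exteriorPower_map_eq_sum_minors {ι : Type*} [Fintype ι] [LinearOrder ι]
    (b : Module.Basis ι R M) (f : M →ₗ[R] M) (k : ℕ) :
    LinearMap.trace R _ (exteriorPower.map k f) =
      ∑ s ∈ univ.powersetCard k,
        ((LinearMap.toMatrix b b f).submatrix (Subtype.val : s → ι) Subtype.val).det := by
  rw [LinearMap.trace_eq_matrix_trace R (b.exteriorPower k), Matrix.trace,
    Finset.sum_subtype (p := (· ∈ Set.powersetCard ι k)) (univ.powersetCard k) (by simp)]
  refine Finset.sum_congr rfl fun s _ ↦ ?_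
  rw [Matrix.diag_apply, toMatrix_exteriorPower_map,
    ← Matrix.det_submatrix_equiv_self (Set.powersetCard.orderIsoOfFin s).toEquiv]
  rfl

lemma trace_exteriorPower_map_eq_charpoly_coeff [StrongRankCondition R] [Module.Free R M]
    [Module.Finite R M] (f : M →ₗ[R] M) {k : ℕ} (hk : k ≤ Module.finrank R M) :
    LinearMap.trace R _ (exteriorPower.map k f) =
      (-1) ^ k * f.charpoly.coeff (Module.finrank R M - k) := by
  let b := Module.finBasis R M
  have hminors := (LinearMap.toMatrix b b f).charpoly_coeff_eq_sum_minors k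
    (by rwa [Fintype.card_fin])
  rw [LinearMap.charpoly_toMatrix, Fintype.card_fin,
    ← trace_exteriorPower_map_eq_sum_minors] at hminors
  rw [hminors, ← mul_assoc, ← mul_pow, neg_one_mul, neg_neg, one_pow, one_mul]

lemma coe_aeval_restrict {f : Module.End R M} {W : Submodule R M} (hf : ∀ x ∈ W, f x ∈ W)
    (p : R[X]) (x : W) : (aeval (f.restrict hf) p x : M) = aeval f p x := by
  have hpow (m : ℕ) : ((f.restrict hf ^ m) x : M) = (f ^ m) x := by
    rw [Module.End.pow_restrict m hf, LinearMap.coe_restrict_apply]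
  simp [aeval_eq_sum_range, hpow]

end Endomorphism

section PermutationModule

variable (R : Type*) [CommRing R] {ι : Type*}

/-- The action of `σ` on the permutation module `R^ι`. The inverse makes it a left action, which
sends the basis vector `eᵢ` to `e_{σ i}`. -/
def permMap (σ : Equiv.Perm ι) : (ι → R) →ₗ[R] (ι → R) :=
  LinearMap.funLeft R R ⇑σ⁻¹

variable {R}

lemma permMap_single [DecidableEq ι] (σ : Equiv.Perm ι) (i : ι) (r : R) :
    permMap R σ (Pi.single i r) = Pi.single (σ i) r := by
  ext j
  simp [permMap, Pi.single_apply, Equiv.symm_apply_eq]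

lemma permMap_pow_single [DecidableEq ι] (σ : Equiv.Perm ι) (m : ℕ) (i : ι) (r : R) :
    (permMap R σ ^ m) (Pi.single i r) = Pi.single ((σ ^ m) i) r := by
  induction m with
  | zero => simp
  | succ m ih =>
    rw [pow_succ', Module.End.mul_apply, ih, permMap_single, pow_succ', Equiv.Perm.mul_apply]

variable [Fintype ι]

section CyclicVector

variable [DecidableEq ι] {σ : Equiv.Perm ι}

lemma aeval_permMap_single_apply (hσ : σ.IsCycleOn Set.univ) (i : ι) {p : R[X]}
    (hp : p.natDegree < Fintype.card ι) {m : ℕ} (hm : m < Fintype.card ι) :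
    aeval (permMap R σ) p (Pi.single i 1) ((σ ^ m) i) = p.coeff m := by
  rw [← Finset.coe_univ] at hσ
  have hne (l : ℕ) (hl : l < Fintype.card ι) (hlm : l ≠ m) : (σ ^ m) i ≠ (σ ^ l) i := fun h ↦
    hlm (((hσ.pow_apply_eq_pow_apply (mem_univ i)).1 h).eq_of_lt_of_lt hm hl).symm
  rw [aeval_eq_sum_range' hp, LinearMap.sum_apply, Finset.sum_apply,
    Finset.sum_eq_single_of_mem m (mem_range.2 hm)]
  · simp [permMap_pow_single]
  · intro l hl hlm
    simp [permMap_pow_single, Pi.single_eq_of_ne (hne l (mem_range.1 hl) hlm)]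

lemma eq_zero_of_aeval_permMap_single (hσ : σ.IsCycleOn Set.univ) (i : ι) {p : R[X]}
    (hp : p.natDegree < Fintype.card ι) (h : aeval (permMap R σ) p (Pi.single i 1) = 0) :
    p = 0 := by
  ext m
  rw [coeff_zero]
  obtain hm | hm := lt_or_ge m (Fintype.card ι)
  · rw [← aeval_permMap_single_apply hσ i hp hm, h, Pi.zero_apply]
  · exact coeff_eq_zero_of_natDegree_lt (hp.trans_le hm)

lemma aeval_X_pow_card_sub_one_permMap_single (hσ : σ.IsCycleOn Set.univ) (i : ι) (r : R) :
    aeval (permMap R σ) (X ^ Fintype.card ι - 1 : R[X]) (Pi.single i r) = 0 := by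
  rw [← Finset.coe_univ] at hσ
  have hpow : (σ ^ Fintype.card ι) i = i := hσ.pow_card_apply (mem_univ i)
  simp [permMap_pow_single, hpow]

lemma eq_X_pow_sub_one_of_aeval_permMap_single (hσ : σ.IsCycleOn Set.univ) (i : ι) {p : R[X]}
    (hp : p.IsMonicOfDegree (Fintype.card ι)) (h : aeval (permMap R σ) p (Pi.single i 1) = 0) :
    p = X ^ Fintype.card ι - 1 := by
  nontriviality R
  have hcard : 0 < Fintype.card ι := Fintype.card_pos_iff.2 ⟨i⟩
  have hq : (X ^ Fintype.card ι - 1 : R[X]).IsMonicOfDegree (Fintype.card ι) :=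
    (isMonicOfDegree_X_pow R _).sub (by rwa [natDegree_one])
  refine sub_eq_zero.1 <|
    eq_zero_of_aeval_permMap_single hσ i (hp.natDegree_sub_lt hcard.ne' hq) ?_
  rw [map_sub, LinearMap.sub_apply, h, aeval_X_pow_card_sub_one_permMap_single hσ, sub_zero]

end CyclicVector

variable (R ι) in
/-- The standard representation: the vectors of `R^ι` whose coordinates sum to zero. -/
def sumZero : Submodule R (ι → R) :=
  LinearMap.ker
    { toFun := fun x ↦ ∑ i, x i
      map_add' := fun _ _ ↦ Finset.sum_add_distrib
      map_smul' := fun _ _ ↦ (Finset.mul_sum ..).symm : (ι → R) →ₗ[R] R }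

lemma mem_sumZero {x : ι → R} : x ∈ sumZero R ι ↔ ∑ i, x i = 0 := Iff.rfl

lemma permMap_mem_sumZero (σ : Equiv.Perm ι) {x : ι → R} (hx : x ∈ sumZero R ι) :
    permMap R σ x ∈ sumZero R ι :=
  (Equiv.sum_comp σ⁻¹ x).trans hx

variable (R) in
/-- The action of `σ` on the standard representation `sumZero R ι`. -/
def permSumZero (σ : Equiv.Perm ι) : sumZero R ι →ₗ[R] sumZero R ι :=
  (permMap R σ).restrict fun _ ↦ permMap_mem_sumZero σ

variable (R) in
/-- Forgetting the `i`-th coordinate identifies `sumZero R ι` with a free module, since that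
coordinate is minus the sum of the others. -/
noncomputable def sumZeroEquiv (i : ι) : sumZero R ι ≃ₗ[R] ({j // j ≠ i} → R) :=
  LinearEquiv.ofBijective ((LinearMap.funLeft R R Subtype.val).domRestrict (sumZero R ι)) <| by
    classical
    constructor
    · rw [← LinearMap.ker_eq_bot, LinearMap.ker_eq_bot']
      intro x hx
      have hne (j : ι) (hj : j ≠ i) : x.1 j = 0 := congr_fun hx ⟨j, hj⟩
      have hi : x.1 i = 0 := (Fintype.sum_eq_single i hne).symm.trans x.2
      ext j
      obtain rfl | hj := eq_or_ne j i
      · exact hi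
      · exact hne j hj
    · intro y
      let x : ι → R := fun j ↦ if h : j = i then -∑ l, y l else y ⟨j, h⟩
      have hi : x i = -∑ l, y l := dif_pos rfl
      have hne (j : {j // j ≠ i}) : x j = y j := dif_neg j.2
      refine ⟨⟨x, mem_sumZero.2 ?_⟩, funext hne⟩
      rw [Fintype.sum_eq_add_sum_subtype_ne x i, hi, Fintype.sum_congr _ _ hne, neg_add_cancel]

instance [Nonempty ι] : Module.Free R (sumZero R ι) :=
  .of_equiv (sumZeroEquiv R (Classical.arbitrary ι)).symm

instance [Nonempty ι] : Module.Finite R (sumZero R ι) :=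
  .equiv (sumZeroEquiv R (Classical.arbitrary ι)).symm

lemma finrank_sumZero [StrongRankCondition R] [Nonempty ι] :
    Module.finrank R (sumZero R ι) = Fintype.card ι - 1 := by
  classical
  rw [(sumZeroEquiv R (Classical.arbitrary ι)).finrank_eq, Module.finrank_fintype_fun_eq_card]
  simp

lemma charpoly_permSumZero [Nonempty ι] {σ : Equiv.Perm ι} (hσ : σ.IsCycleOn Set.univ) :
    (permSumZero R σ).charpoly = ∑ m ∈ range (Fintype.card ι), X ^ m := by
  classical
  nontriviality R
  obtain ⟨i⟩ := ‹Nonempty ι›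
  set χ := (permSumZero R σ).charpoly
  have hmem : permMap R σ (Pi.single i 1) - Pi.single i 1 ∈ sumZero R ι := by
    simp [mem_sumZero, permMap_single]
  have hcayley : aeval (permSumZero R σ) χ ⟨_, hmem⟩ = 0 := by
    rw [LinearMap.aeval_self_charpoly, LinearMap.zero_apply]
  have hkill : aeval (permMap R σ) (χ * (X - 1)) (Pi.single i 1) = 0 := by
    simpa [permSumZero, coe_aeval_restrict] using congr_arg Subtype.val hcayley
  have hχ : χ.IsMonicOfDegree (Fintype.card ι - 1) :=
    ⟨by rw [LinearMap.charpoly_natDegree, finrank_sumZero], LinearMap.charpoly_monic _⟩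
  have hX : (X - 1 : R[X]).IsMonicOfDegree 1 := isMonicOfDegree_X_sub_one 1
  have hdeg : (χ * (X - 1)).IsMonicOfDegree (Fintype.card ι) := by
    simpa only [Nat.sub_add_cancel Fintype.card_pos] using hχ.mul hX
  refine hX.monic.isRegular.right ?_
  beta_reduce
  rw [eq_X_pow_sub_one_of_aeval_permMap_single hσ i hdeg hkill, geom_sum_mul]

theorem character_n_cycle_on_exterior_power_general {σ : Equiv.Perm ι}
    (hσ : σ.IsCycleOn Set.univ) {k : ℕ} (hk : k < Fintype.card ι) :
    LinearMap.trace R _ (exteriorPower.map k (permSumZero R σ)) = (-1) ^ k := by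
  nontriviality R
  have : Nonempty ι := Fintype.card_pos_iff.1 (Nat.zero_lt_of_lt hk)
  have hcoeff : (permSumZero R σ).charpoly.coeff (Fintype.card ι - 1 - k) = 1 := by
    have hlt : Fintype.card ι - 1 - k < Fintype.card ι := by omega
    simp [charpoly_permSumZero hσ, coeff_X_pow, hlt]
  have hrank : Module.finrank R (sumZero R ι) = Fintype.card ι - 1 := finrank_sumZero
  rw [trace_exteriorPower_map_eq_charpoly_coeff _ (by omega), hrank, hcoeff, mul_one]

end PermutationModule

lemma extMap_eq_exteriorPower_map (n k : ℕ) (f : Vsub n →ₗ[ℂ] Vsub n) :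
    extMap n k f = exteriorPower.map k f := by
  ext v
  exact (ExteriorAlgebra.map_apply_ιMulti f v).trans
    (congr_arg Subtype.val (exteriorPower.map_apply_ιMulti f v)).symm

set_option synthInstance.maxHeartbeats 1000000 in
/-- The character of any `n`-cycle `σ ∈ Sₙ` on the irreducible representation `⋀ᵏV`
(`V` the standard `(n-1)`-dimensional representation) equals `(-1)ᵏ`. -/
theorem character_n_cycle_on_exterior_power (n k : ℕ) (hk : k ≤ n - 1)
    (σ : Equiv.Perm (Fin n)) (hσ : σ.IsCycle ∧ σ.support = univ) :
    LinearMap.trace ℂ _ (extMap n k (permV σ)) = (-1 : ℂ) ^ k := by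
  have hcycle : σ.IsCycleOn Set.univ := by
    have huniv : {i | σ i ≠ i} = Set.univ := by
      ext i
      simp [← Equiv.Perm.mem_support, hσ.2]
    exact huniv ▸ hσ.1.isCycleOn
  have hk' : k < Fintype.card (Fin n) := by
    obtain ⟨i, -⟩ := hσ.1
    have := i.pos
    rw [Fintype.card_fin]
    omega
  rw [extMap_eq_exteriorPower_map]
  -- `permV σ` and `permSumZero ℂ σ` agree definitionally.
  exact character_n_cycle_on_exterior_power_general (R := ℂ) hcycle hk'
end

section
/- The number of sequences of n-1 transpositions in Sₙ whose product is an n-cycle equals (n-1)!·n^{n-2}. Moreover, for any labeled tree on vertex set {1,...,n}, the product of the n-1 transpositions corresponding to its edges, taken in any order, is always an n-cycle; conversely every minimal transitive factorization of an n-cycle arises this way from a tree. -/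
open Finset Equiv

/-- The ordered product `τ_m ⋯ τ_1` of a sequence of permutations. -/
def prodRev {n m : ℕ} (τ : Fin m → Equiv.Perm (Fin n)) : Equiv.Perm (Fin n) :=
  (List.ofFn τ).reverse.prod

/-- `σ` is an `n`-cycle of `Sₙ`. -/
def IsNCycle {n : ℕ} (σ : Equiv.Perm (Fin n)) : Prop :=
  σ.IsCycle ∧ σ.support = univ

/-- The transposition associated to an unordered pair. -/
def sym2Swap {n : ℕ} : Sym2 (Fin n) → Equiv.Perm (Fin n) :=
  Sym2.lift ⟨fun a b => Equiv.swap a b, fun a b => Equiv.swap_comm a b⟩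

/-!
Multiplying a permutation by a transposition whose two points lie in different cycles joins these
cycles. Hence, whatever the order of its edges, the product of the transpositions of a forest has
the components of the forest as its cycles, while for an arbitrary graph every cycle still lies
inside one component. So `n - 1` edges on `n` vertices yield an `n`-cycle exactly when they connect
all the vertices, that is, when they are the distinct edges of a tree.

Such sequences of edges are counted by adding one edge at a time. Let `N` be the number of sequences
of `m` edges connecting a graph on `n` vertices with `m + 1` components `C`; then
`n * N = m! * n ^ m * ∏ |C|`. The first new edge has to join two components `A` and `B`, which
replaces `|A| * |B|` by `|A| + |B|` in the product; this amounts to summing, over the two ends of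
the edge, the product of the sizes of the components not containing that end. Choosing this end `v`
first, `n - |C(v)|` edges are available, and the total is `m * n * ∏ |C|`.
-/

section Permutations

variable {V : Type*}

/-- The subgroup of permutations mapping every equivalence class of `r` into itself, so that each
of their cycles lies inside one class. -/
def classwisePerm (r : Setoid V) : Subgroup (Perm V) where
  carrier := {σ | ∀ v, r v (σ v)}
  mul_mem' hσ hτ v := r.trans (hτ v) (hσ _)
  one_mem' := r.refl
  inv_mem' {σ} hσ v := by simpa using r.symm (hσ (σ⁻¹ v))

lemma rel_of_sameCycle {r : Setoid V} {σ : Perm V} (hσ : σ ∈ classwisePerm r) {u v : V}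
    (h : σ.SameCycle u v) : r u v := by
  obtain ⟨i, rfl⟩ := h
  exact zpow_mem hσ i u

lemma rel_of_reachable {r : Setoid V} {G : SimpleGraph V} (hG : ∀ a b, G.Adj a b → r a b)
    {u v : V} (h : G.Reachable u v) : r u v := by
  obtain ⟨w⟩ := h
  induction w with
  | nil => exact r.refl _
  | cons hab _ ih => exact r.trans (hG _ _ hab) ih

variable [DecidableEq V]

lemma swap_mem_classwisePerm {r : Setoid V} {a b : V} (h : r a b) : swap a b ∈ classwisePerm r := by
  intro v
  rw [swap_apply_def]
  split_ifs with hva hvb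
  · exact hva ▸ h
  · exact hvb ▸ r.symm h
  · exact r.refl v

lemma sameCycle_swap_mul [Finite V] {σ : Perm V} {a b : V} (h : ¬σ.SameCycle a b) :
    (swap a b * σ).SameCycle a b := by
  by_contra hab
  set ρ := swap a b * σ with hρ
  have orbit_subset : ∀ i : ℕ, σ.SameCycle a ((ρ ^ i) a) := by
    intro i
    induction i with
    | zero => rfl
    | succ i ih =>
      rw [pow_succ', Perm.mul_apply]
      set x := (ρ ^ i) a with hx
      have hne_a : σ x ≠ a := fun e => hab ⟨(i + 1 : ℕ), by
        rw [zpow_natCast, pow_succ', Perm.mul_apply, ← hx, hρ, Perm.mul_apply, e, swap_apply_left]⟩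
      have hne_b : σ x ≠ b := fun e => h (e ▸ Perm.sameCycle_apply_right.2 ih)
      rw [hρ, Perm.mul_apply, swap_apply_of_ne_of_ne hne_a hne_b]
      exact Perm.sameCycle_apply_right.2 ih
  obtain ⟨i, hi⟩ := (Perm.sameCycle_symm_apply_right.2 (Perm.SameCycle.refl ρ a)).exists_nat_pow_eq
  have hpre : ρ⁻¹ a = σ⁻¹ b := by simp [hρ]
  exact h (Perm.sameCycle_symm_apply_right.1 (hpre ▸ hi ▸ orbit_subset i))

lemma sameCycle_swap_mul_of_sameCycle [Finite V] {σ : Perm V} {a b u v : V}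
    (hab : ¬σ.SameCycle a b) (huv : σ.SameCycle u v) : (swap a b * σ).SameCycle u v := by
  set ρ := swap a b * σ with hρ
  have hσ : σ = swap a b * ρ := by rw [hρ, swap_mul_self_mul]
  refine rel_of_sameCycle (r := Perm.SameCycle.setoid ρ) ?_ huv
  rw [hσ]
  exact mul_mem (swap_mem_classwisePerm (sameCycle_swap_mul hab))
    fun v => Perm.sameCycle_apply_right.2 (Perm.SameCycle.refl ρ v)

end Permutations

section EdgeSwap

open SimpleGraph

variable {V : Type*} [DecidableEq V]

/-- The transposition exchanging the two ends of an edge, and the identity for a loop. This is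
`sym2Swap` over an arbitrary vertex type. -/
def edgeSwap : Sym2 V → Perm V :=
  Sym2.lift ⟨fun a b => swap a b, fun a b => swap_comm a b⟩

lemma sym2Swap_eq_edgeSwap (n : ℕ) : sym2Swap (n := n) = edgeSwap := rfl

lemma edgeSwap_mk (a b : V) : edgeSwap s(a, b) = swap a b := rfl

lemma isSwap_edgeSwap {e : Sym2 V} (he : ¬e.IsDiag) : (edgeSwap e).IsSwap := by
  induction e with
  | _ a b => exact ⟨a, b, he, rfl⟩

lemma edgeSwap_injOn : Set.InjOn (edgeSwap (V := V)) {e | ¬e.IsDiag} := by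
  intro e he e' _ h
  induction e with | _ a b =>
  induction e' with | _ c d =>
  have hab : a ≠ b := he
  have ha : swap c d a = b := by rw [← edgeSwap_mk, ← h, edgeSwap_mk, swap_apply_left]
  rw [swap_apply_def] at ha
  grind

lemma exists_eq_edgeSwap_comp {ι : Type*} {τ : ι → Perm V} (hτ : ∀ i, (τ i).IsSwap) :
    ∃ f : ι → Sym2 V, (∀ i, ¬(f i).IsDiag) ∧ τ = edgeSwap ∘ f := by
  choose a b hab hswap using hτ
  exact ⟨fun i => s(a i, b i), hab, funext hswap⟩

lemma fromRel_edgeSwap_eq_swap {ι : Type*} {f : ι → Sym2 V} (hf : ∀ i, ¬(f i).IsDiag) :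
    SimpleGraph.fromRel (fun a b => ∃ i, edgeSwap (f i) = swap a b)
      = fromEdgeSet (Set.range f) := by
  ext a b
  rw [fromRel_adj, fromEdgeSet_adj, and_comm, swap_comm b a, or_self]
  refine and_congr_left fun hab => exists_congr fun i => ?_
  exact (edgeSwap_injOn.eq_iff (hf i) (show s(a, b) ∈ {e : Sym2 V | ¬e.IsDiag} from hab))

lemma reachable_of_sameCycle_prod_edgeSwap {L : List (Sym2 V)} {u v : V}
    (h : (L.map edgeSwap).prod.SameCycle u v) : (fromEdgeSet {e | e ∈ L}).Reachable u v := by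
  refine rel_of_sameCycle (r := reachableSetoid _) (Subgroup.list_prod_mem _ ?_) h
  simp only [List.mem_map, forall_exists_index, and_imp, forall_apply_eq_imp_iff₂]
  intro e he
  induction e with | _ a b =>
  refine swap_mem_classwisePerm ?_
  obtain rfl | hab := eq_or_ne a b
  · exact Reachable.refl a
  · exact Adj.reachable ((fromEdgeSet_adj _).2 ⟨he, hab⟩)

theorem sameCycle_prod_edgeSwap_iff [Finite V] {L : List (Sym2 V)} (hnodup : L.Nodup)
    (hloop : ∀ e ∈ L, ¬e.IsDiag) (hforest : (fromEdgeSet {e | e ∈ L}).IsAcyclic) {u v : V} :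
    (L.map edgeSwap).prod.SameCycle u v ↔ (fromEdgeSet {e | e ∈ L}).Reachable u v := by
  refine ⟨reachable_of_sameCycle_prod_edgeSwap, fun h => ?_⟩
  induction L generalizing u v with
  | nil =>
    have hbot : fromEdgeSet {e : Sym2 V | e ∈ []} = ⊥ := by simp
    rw [hbot, reachable_bot] at h
    exact h ▸ Perm.SameCycle.refl _ _
  | cons e L ih =>
    induction e with | _ a b =>
    obtain ⟨hnew, hnodup⟩ := List.nodup_cons.1 hnodup
    obtain ⟨hab, hloop⟩ := List.forall_mem_cons.1 hloop
    have hcons : fromEdgeSet {e | e ∈ s(a, b) :: L} = fromEdgeSet {e | e ∈ L} ⊔ edge a b := by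
      rw [edge, ← fromEdgeSet_union, Set.union_singleton]
      simp only [List.mem_cons, Set.insert_def, Set.mem_ofPred_eq]
    rw [hcons] at hforest h
    obtain ⟨hforest, hbridge⟩ := isAcyclic_sup_fromEdgeSet_iff.1 hforest
    have hsep : ¬(L.map edgeSwap).prod.SameCycle a b := fun hcyc => by
      rcases hbridge (reachable_of_sameCycle_prod_edgeSwap hcyc) with rfl | hadj
      · exact hab rfl
      · exact hnew ((fromEdgeSet_adj _).1 hadj).1
    rw [List.map_cons, List.prod_cons, edgeSwap_mk]
    refine rel_of_reachable (r := Perm.SameCycle.setoid _) (fun x y hxy => ?_) h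
    rcases hxy with hxy | hxy
    · exact sameCycle_swap_mul_of_sameCycle hsep (ih hnodup hloop hforest hxy.reachable)
    · obtain ⟨⟨rfl, rfl⟩ | ⟨rfl, rfl⟩, -⟩ := (edge_adj _ _ _ _).1 hxy
      · exact sameCycle_swap_mul hsep
      · exact (sameCycle_swap_mul hsep).symm

end EdgeSwap

section AddingAnEdge

open SimpleGraph

variable {V : Type*} {G : SimpleGraph V} {a b : V}

/-- The component of `G ⊔ edge a b` containing a given component of `G`. -/
def absorb (G : SimpleGraph V) (a b : V) :
    G.ConnectedComponent → (G ⊔ edge a b).ConnectedComponent :=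
  ConnectedComponent.map (Hom.ofLE le_sup_left)

lemma absorb_mk (v : V) :
    absorb G a b (G.connectedComponentMk v) = (G ⊔ edge a b).connectedComponentMk v := rfl

lemma absorb_surjective : Function.Surjective (absorb G a b) :=
  ConnectedComponent.surjective_map_ofLE le_sup_left

lemma absorb_left_eq_right :
    absorb G a b (G.connectedComponentMk a) = absorb G a b (G.connectedComponentMk b) := by
  rw [absorb_mk, absorb_mk, ConnectedComponent.eq]
  obtain rfl | hab := eq_or_ne a b
  · rfl
  · exact Adj.reachable (Or.inr ((edge_adj _ _ _ _).2 ⟨Or.inl ⟨rfl, rfl⟩, hab⟩))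

lemma absorb_eq_absorb_iff {C D : G.ConnectedComponent} :
    absorb G a b C = absorb G a b D ↔
      C = D ∨ (C = G.connectedComponentMk a ∨ C = G.connectedComponentMk b) ∧
        (D = G.connectedComponentMk a ∨ D = G.connectedComponentMk b) := by
  classical
  constructor
  · let retract (C : G.ConnectedComponent) : G.ConnectedComponent :=
      if C = G.connectedComponentMk a then G.connectedComponentMk b else C
    have retract_eq {u v : V} (h : (G ⊔ edge a b).Reachable u v) :
        retract (G.connectedComponentMk u) = retract (G.connectedComponentMk v) := by
      refine rel_of_reachable (r := Setoid.ker fun v => retract (G.connectedComponentMk v))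
        (fun x y hxy => ?_) h
      rw [Setoid.ker_def]
      rcases hxy with hxy | hxy
      · rw [ConnectedComponent.connectedComponentMk_eq_of_adj hxy]
      · obtain ⟨⟨rfl, rfl⟩ | ⟨rfl, rfl⟩, -⟩ := (edge_adj _ _ _ _).1 hxy <;> simp [retract]
    intro h
    induction C using ConnectedComponent.ind with | _ u =>
    induction D using ConnectedComponent.ind with | _ v =>
    have huv : (G ⊔ edge a b).Reachable u v := ConnectedComponent.exact h
    have := retract_eq huv
    grind
  · rintro (rfl | ⟨rfl | rfl, rfl | rfl⟩)
    exacts [rfl, rfl, absorb_left_eq_right, absorb_left_eq_right.symm, rfl]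

lemma absorb_injOn : Set.InjOn (absorb G a b) {C | C ≠ G.connectedComponentMk a} := by
  intro C hC D hD h
  rw [Set.mem_ofPred_eq] at hC hD
  grind [absorb_eq_absorb_iff.1 h]

lemma exists_absorb_eq (hab : ¬G.Reachable a b) (D : (G ⊔ edge a b).ConnectedComponent) :
    ∃ C ≠ G.connectedComponentMk a, absorb G a b C = D := by
  obtain ⟨C, rfl⟩ := absorb_surjective D
  obtain rfl | hC := eq_or_ne C (G.connectedComponentMk a)
  · exact ⟨G.connectedComponentMk b, fun h => hab (ConnectedComponent.exact h.symm),
      absorb_left_eq_right.symm⟩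
  · exact ⟨C, hC, rfl⟩

lemma supp_absorb_right :
    (absorb G a b (G.connectedComponentMk b)).supp
      = (G.connectedComponentMk a).supp ∪ (G.connectedComponentMk b).supp := by
  ext v
  rw [ConnectedComponent.mem_supp_iff, ← absorb_mk, absorb_eq_absorb_iff]
  grind [ConnectedComponent.mem_supp_iff]

lemma ncard_supp_absorb_right [Finite V] (hab : ¬G.Reachable a b) :
    (absorb G a b (G.connectedComponentMk b)).supp.ncard
      = (G.connectedComponentMk a).supp.ncard + (G.connectedComponentMk b).supp.ncard := by
  rw [supp_absorb_right, Set.ncard_union_eq]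
  exact pairwise_disjoint_supp_connectedComponent G fun h => hab (ConnectedComponent.exact h)

lemma supp_absorb_of_ne {C : G.ConnectedComponent} (ha : C ≠ G.connectedComponentMk a)
    (hb : C ≠ G.connectedComponentMk b) : (absorb G a b C).supp = C.supp := by
  ext v
  rw [ConnectedComponent.mem_supp_iff, ← absorb_mk, absorb_eq_absorb_iff,
    ConnectedComponent.mem_supp_iff]
  grind

lemma card_connectedComponent_sup_edge [Finite V] (hab : ¬G.Reachable a b) :
    Nat.card (G ⊔ edge a b).ConnectedComponent + 1 = Nat.card G.ConnectedComponent := by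
  classical
  rw [← Nat.card_congr (optionSubtypeNe (G.connectedComponentMk a)), Finite.card_option]
  congr 1
  refine (Nat.card_congr (Equiv.ofBijective (fun C => absorb G a b C.1) ⟨?_, fun D => ?_⟩)).symm
  · exact Set.injOn_iff_injective.1 absorb_injOn
  · obtain ⟨C, hC, rfl⟩ := exists_absorb_eq hab D
    exact ⟨⟨C, hC⟩, rfl⟩

lemma card_connectedComponent_sup_edge_of_reachable (hab : G.Reachable a b) :
    Nat.card (G ⊔ edge a b).ConnectedComponent = Nat.card G.ConnectedComponent := by
  have heq : G.connectedComponentMk a = G.connectedComponentMk b := ConnectedComponent.sound hab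
  refine (Nat.card_congr (Equiv.ofBijective _ ⟨fun C D h => ?_, absorb_surjective⟩)).symm
  grind [absorb_eq_absorb_iff.1 h]

lemma sup_fromEdgeSet_range_cons {m : ℕ} (e : Sym2 V) (f : Fin m → Sym2 V) :
    G ⊔ fromEdgeSet (Set.range (Fin.cons e f : Fin (m + 1) → Sym2 V))
      = G ⊔ fromEdgeSet {e} ⊔ fromEdgeSet (Set.range f) := by
  rw [Fin.range_cons, Set.insert_eq, fromEdgeSet_union, sup_assoc]

lemma card_connectedComponent_le_of_connected_sup [Finite V] {m : ℕ} {f : Fin m → Sym2 V}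
    (h : (G ⊔ fromEdgeSet (Set.range f)).Connected) : Nat.card G.ConnectedComponent ≤ m + 1 := by
  induction m generalizing G with
  | zero =>
    rw [Set.range_eq_empty, fromEdgeSet_empty, sup_bot_eq] at h
    exact Finite.card_le_one_iff_subsingleton.2 h.preconnected.subsingleton_connectedComponent
  | succ m ih =>
    obtain ⟨e, f, rfl⟩ : ∃ e g, f = Fin.cons e g := ⟨f 0, Fin.tail f, (Fin.cons_self_tail f).symm⟩
    rw [sup_fromEdgeSet_range_cons] at h
    have hle := ih h
    induction e with | _ a b =>
    change Nat.card (G ⊔ edge a b).ConnectedComponent ≤ m + 1 at hle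
    by_cases hab : G.Reachable a b
    · rw [card_connectedComponent_sup_edge_of_reachable hab] at hle
      lia
    · rw [← card_connectedComponent_sup_edge hab]
      lia

end AddingAnEdge

section RootingCount

open SimpleGraph

variable {V : Type*} [Fintype V] {G : SimpleGraph V}

open scoped Classical in
/-- The number of ways to choose one root in every connected component of `G`, that is, the
product of the sizes of the components. -/
noncomputable def rootingCount (G : SimpleGraph V) : ℕ :=
  ∏ C : G.ConnectedComponent, C.supp.ncard

open scoped Classical in
/-- The number of ways to choose one root in every connected component of `G` except the one
containing `v`. -/
noncomputable def rootingCountAvoiding (G : SimpleGraph V) (v : V) : ℕ :=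
  ∏ C ∈ univ.erase (G.connectedComponentMk v), C.supp.ncard

lemma ncard_supp_mul_rootingCountAvoiding (v : V) :
    (G.connectedComponentMk v).supp.ncard * rootingCountAvoiding G v = rootingCount G := by
  classical
  exact mul_prod_erase univ (fun C : G.ConnectedComponent => C.supp.ncard) (mem_univ _)

open scoped Classical in
lemma rootingCount_sup_edge_eq_prod {a b : V} (hab : ¬G.Reachable a b) :
    rootingCount (G ⊔ edge a b)
      = ∏ C ∈ univ.erase (G.connectedComponentMk a), (absorb G a b C).supp.ncard := by
  refine (prod_nbij (absorb G a b) (fun _ _ => by simp) ?_ ?_ fun _ _ => rfl).symm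
  · intro C hC D hD
    exact absorb_injOn (ne_of_mem_erase hC) (ne_of_mem_erase hD)
  · intro D _
    obtain ⟨C, hC, hCD⟩ := exists_absorb_eq hab D
    exact ⟨C, mem_erase.2 ⟨hC, mem_univ C⟩, hCD⟩

lemma rootingCount_sup_edge {a b : V} (hab : ¬G.Reachable a b) :
    rootingCount (G ⊔ edge a b) = rootingCountAvoiding G a + rootingCountAvoiding G b := by
  classical
  set A := G.connectedComponentMk a
  set B := G.connectedComponentMk b
  have hAB : A ≠ B := fun h => hab (ConnectedComponent.exact h)
  have hA : A ∈ univ.erase B := mem_erase.2 ⟨hAB, mem_univ A⟩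
  have hB : B ∈ univ.erase A := mem_erase.2 ⟨hAB.symm, mem_univ B⟩
  have unchanged : ∏ C ∈ (univ.erase A).erase B, (absorb G a b C).supp.ncard
      = ∏ C ∈ (univ.erase A).erase B, C.supp.ncard :=
    prod_congr rfl fun C hC => by
      rw [supp_absorb_of_ne (ne_of_mem_erase (mem_of_mem_erase hC)) (ne_of_mem_erase hC)]
  calc rootingCount (G ⊔ edge a b)
      = (A.supp.ncard + B.supp.ncard) * ∏ C ∈ (univ.erase A).erase B, C.supp.ncard := by
        rw [rootingCount_sup_edge_eq_prod hab, ← mul_prod_erase _ _ hB,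
          ncard_supp_absorb_right hab, unchanged]
    _ = B.supp.ncard * ∏ C ∈ (univ.erase A).erase B, C.supp.ncard
        + A.supp.ncard * ∏ C ∈ (univ.erase B).erase A, C.supp.ncard := by
        rw [erase_right_comm, add_mul, add_comm]
    _ = rootingCountAvoiding G a + rootingCountAvoiding G b := by
        rw [rootingCountAvoiding, rootingCountAvoiding, ← mul_prod_erase _ _ hB,
          ← mul_prod_erase _ _ hA]

lemma rootingCount_bot : rootingCount (⊥ : SimpleGraph V) = 1 := by
  refine prod_eq_one fun C _ => ?_
  induction C using ConnectedComponent.ind with | _ v =>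
  rw [Set.ncard_eq_one]
  exact ⟨v, by ext u; simp [ConnectedComponent.mem_supp_iff, ConnectedComponent.eq]⟩

lemma rootingCount_of_connected (h : G.Connected) : rootingCount G = Fintype.card V := by
  classical
  obtain ⟨v⟩ := h.nonempty
  have unique (C : G.ConnectedComponent) : C = G.connectedComponentMk v :=
    h.preconnected.subsingleton_connectedComponent.elim _ _
  have hsupp : (G.connectedComponentMk v).supp = Set.univ := Set.eq_univ_of_forall fun u => unique _
  rw [rootingCount, Fintype.prod_eq_single (G.connectedComponentMk v)
    fun C hC => absurd (unique C) hC, hsupp, Set.ncard_univ, Nat.card_eq_fintype_card]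

lemma sum_rootingCountAvoiding :
    ∑ v, rootingCountAvoiding G v = Nat.card G.ConnectedComponent * rootingCount G := by
  classical
  have per_component (C : G.ConnectedComponent) :
      ∑ v with G.connectedComponentMk v = C, rootingCountAvoiding G v = rootingCount G := by
    induction C using ConnectedComponent.ind with | _ u =>
    have hconst : ∀ v ∈ ({v | G.connectedComponentMk v = G.connectedComponentMk u} : Finset V),
        rootingCountAvoiding G v = rootingCountAvoiding G u := fun v hv => by
      rw [rootingCountAvoiding, (mem_filter.1 hv).2, rootingCountAvoiding]
    rw [sum_congr rfl hconst, sum_const, smul_eq_mul, ← ncard_supp_mul_rootingCountAvoiding u,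
      ← Set.ncard_coe_finset]
    congr 2
    ext v
    simp
  rw [← sum_fiberwise univ G.connectedComponentMk, sum_congr rfl fun C _ => per_component C,
    sum_const, card_univ, smul_eq_mul, Nat.card_eq_fintype_card]

/-- The graph joining any two vertices that lie in different connected components of `G`. -/
def separationGraph (G : SimpleGraph V) : SimpleGraph V where
  Adj a b := ¬G.Reachable a b
  symm := ⟨fun _ _ h h' => h h'.symm⟩
  loopless := ⟨fun v h => h (Reachable.refl v)⟩

open scoped Classical in
lemma degree_separationGraph (v : V) :
    (separationGraph G).degree v + (G.connectedComponentMk v).supp.ncard = Fintype.card V := by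
  have hcompl : (separationGraph G).neighborFinset v
      = ({u | G.connectedComponentMk u = G.connectedComponentMk v} : Finset V)ᶜ := by
    ext u
    rw [mem_neighborFinset, mem_compl, mem_filter_univ, ConnectedComponent.eq, reachable_comm]
    rfl
  have hsupp : (G.connectedComponentMk v).supp.ncard
      = #({u | G.connectedComponentMk u = G.connectedComponentMk v} : Finset V) := by
    rw [← Set.ncard_coe_finset, coe_filter_univ]
    rfl
  rw [← card_neighborFinset_eq_degree, hcompl, hsupp, card_compl_add_card]

lemma sum_edgeFinset_sum_toFinset {M : Type*} [AddCommMonoid M] [DecidableEq V]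
    (H : SimpleGraph V) [DecidableRel H.Adj] (w : V → M) :
    ∑ e ∈ H.edgeFinset, ∑ v ∈ e.toFinset, w v = ∑ v, H.degree v • w v := by
  have hswap : ∑ e ∈ H.edgeFinset, ∑ v ∈ e.toFinset, w v
      = ∑ v, ∑ _e ∈ H.incidenceFinset v, w v :=
    sum_comm' fun e v => by simp [incidenceFinset_eq_filter]
  simp only [hswap, sum_const, card_incidenceFinset_eq_degree]

lemma rootingCount_sup_fromEdgeSet [DecidableEq V] {e : Sym2 V}
    (he : e ∈ (separationGraph G).edgeSet) :
    rootingCount (G ⊔ fromEdgeSet {e}) = ∑ v ∈ e.toFinset, rootingCountAvoiding G v := by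
  induction e with | _ a b =>
  rw [Sym2.toFinset_mk_eq, sum_pair ((mem_edgeSet _).1 he).ne]
  exact rootingCount_sup_edge he

open scoped Classical in
lemma sum_rootingCount_sup_fromEdgeSet {k : ℕ} (hk : Nat.card G.ConnectedComponent = k + 1) :
    ∑ e ∈ (separationGraph G).edgeFinset, rootingCount (G ⊔ fromEdgeSet {e})
      = k * Fintype.card V * rootingCount G := by
  have hdegree (v : V) : (separationGraph G).degree v * rootingCountAvoiding G v + rootingCount G
      = Fintype.card V * rootingCountAvoiding G v := by
    rw [← ncard_supp_mul_rootingCountAvoiding v, ← add_mul, degree_separationGraph]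
  rw [sum_congr rfl fun e he => rootingCount_sup_fromEdgeSet (mem_edgeFinset.1 he),
    sum_edgeFinset_sum_toFinset]
  apply Nat.add_right_cancel (m := Fintype.card V * rootingCount G)
  calc (∑ v, (separationGraph G).degree v • rootingCountAvoiding G v)
        + Fintype.card V * rootingCount G
      = ∑ v, ((separationGraph G).degree v * rootingCountAvoiding G v + rootingCount G) := by
        simp only [sum_add_distrib, sum_const, card_univ, smul_eq_mul]
    _ = Fintype.card V * ((k + 1) * rootingCount G) := by
        simp only [hdegree, ← mul_sum, sum_rootingCountAvoiding, hk]
    _ = k * Fintype.card V * rootingCount G + Fintype.card V * rootingCount G := by ring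

end RootingCount

section ConnectingCount

open SimpleGraph

variable {V : Type*} {G : SimpleGraph V}

/-- The number of sequences of `m` edges (repetitions and loops allowed) whose addition makes `G`
connected. -/
noncomputable def connectingCount (G : SimpleGraph V) (m : ℕ) : ℕ :=
  Nat.card {f : Fin m → Sym2 V // (G ⊔ fromEdgeSet (Set.range f)).Connected}

lemma connectingCount_zero (h : G.Connected) : connectingCount G 0 = 1 := by
  rw [connectingCount, Nat.card_eq_one_iff_unique]
  exact ⟨inferInstance, ⟨default, by simpa using h⟩⟩

lemma connectingCount_eq_zero [Finite V] {m : ℕ} (h : m + 1 < Nat.card G.ConnectedComponent) :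
    connectingCount G m = 0 := by
  have : IsEmpty {f : Fin m → Sym2 V // (G ⊔ fromEdgeSet (Set.range f)).Connected} :=
    ⟨fun f => h.not_ge (card_connectedComponent_le_of_connected_sup f.2)⟩
  exact Nat.card_of_isEmpty

lemma connectingCount_succ [Fintype V] (m : ℕ) :
    connectingCount G (m + 1) = ∑ e : Sym2 V, connectingCount (G ⊔ fromEdgeSet {e}) m := by
  simp only [connectingCount]
  rw [← Nat.card_sigma]
  refine Nat.card_congr (Equiv.trans ?_ (Equiv.subtypeProdEquivSigmaSubtype fun (e : Sym2 V)
    (f : Fin m → Sym2 V) => (G ⊔ fromEdgeSet {e} ⊔ fromEdgeSet (Set.range f)).Connected))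
  refine (Equiv.subtypeEquiv (Fin.consEquiv fun _ => Sym2 V) fun p => ?_).symm
  rw [← sup_fromEdgeSet_range_cons]
  rfl

theorem card_mul_connectingCount [Fintype V] {m : ℕ}
    (hm : Nat.card G.ConnectedComponent = m + 1) :
    Fintype.card V * connectingCount G m = m.factorial * Fintype.card V ^ m * rootingCount G := by
  classical
  induction m generalizing G with
  | zero =>
    obtain ⟨_, ⟨C⟩⟩ := Nat.card_eq_one_iff_unique.1 hm
    have hG : G.Connected := (connected_iff G).2
      ⟨fun u v => ConnectedComponent.exact (Subsingleton.elim _ _), ⟨C.out⟩⟩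
    rw [connectingCount_zero hG, rootingCount_of_connected hG]
    simp
  | succ m ih =>
    have vanish : ∀ e ∉ (separationGraph G).edgeFinset,
        connectingCount (G ⊔ fromEdgeSet {e}) m = 0 := fun e he => by
      induction e with | _ a b =>
      have hab : G.Reachable a b := not_not.1 (mem_edgeFinset.not.1 he)
      refine connectingCount_eq_zero (lt_of_lt_of_eq ?_
        (card_connectedComponent_sup_edge_of_reachable hab).symm)
      lia
    have evaluate : ∀ e ∈ (separationGraph G).edgeFinset,
        Fintype.card V * connectingCount (G ⊔ fromEdgeSet {e}) m
          = m.factorial * Fintype.card V ^ m * rootingCount (G ⊔ fromEdgeSet {e}) := fun e he => by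
      induction e with | _ a b =>
      have hab : ¬G.Reachable a b := mem_edgeFinset.1 he
      exact ih (Nat.add_right_cancel ((card_connectedComponent_sup_edge hab).trans hm))
    rw [connectingCount_succ, ← sum_subset (subset_univ _) fun e _ => vanish e, mul_sum,
      sum_congr rfl evaluate, ← mul_sum, sum_rootingCount_sup_fromEdgeSet hm,
      Nat.factorial_succ, pow_succ]
    ring

lemma card_connectedComponent_bot :
    Nat.card (⊥ : SimpleGraph V).ConnectedComponent = Nat.card V := by
  refine (Nat.card_congr (Equiv.ofBijective _ ⟨fun u v h => ?_, fun C => C.exists_rep⟩)).symm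
  exact reachable_bot.1 (ConnectedComponent.exact h)

theorem connectingCount_bot [Fintype V] [Nonempty V] :
    connectingCount (⊥ : SimpleGraph V) (Fintype.card V - 1)
      = (Fintype.card V - 1).factorial * Fintype.card V ^ (Fintype.card V - 2) := by
  obtain ⟨m, hV⟩ : ∃ m, Fintype.card V = m + 1 := Nat.exists_eq_add_one.2 Fintype.card_pos
  have h := card_mul_connectingCount (V := V) (G := ⊥) (m := m) (by
    rw [card_connectedComponent_bot, Nat.card_eq_fintype_card, hV])
  rw [rootingCount_bot, hV, mul_one] at h
  rw [hV, Nat.add_sub_cancel]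
  refine Nat.eq_of_mul_eq_mul_left (by lia : 0 < m + 1) (h.trans ?_)
  cases m with
  | zero => rfl
  | succ m =>
    rw [Nat.add_sub_add_right, Nat.add_sub_cancel, pow_succ]
    ring

end ConnectingCount

section TreeSequences

open SimpleGraph

variable {V : Type*}

lemma injective_loopless_isTree_of_connected [Finite V] {ι : Type*} [Finite ι] {f : ι → Sym2 V}
    (hcard : Nat.card ι < Nat.card V) (h : (fromEdgeSet (Set.range f)).Connected) :
    Function.Injective f ∧ (∀ i, ¬(f i).IsDiag) ∧ (fromEdgeSet (Set.range f)).IsTree := by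
  have hedge : (fromEdgeSet (Set.range f)).edgeSet = Set.range f \ Sym2.diagSet :=
    edgeSet_fromEdgeSet _
  have spanning := h.card_vert_le_card_edgeSet_add_one
  rw [hedge, Nat.card_coe_set_eq] at spanning
  have few_edges : (Set.range f \ Sym2.diagSet).ncard ≤ (Set.range f).ncard :=
    Set.ncard_le_ncard Set.sdiff_subset
  have few_values : (Set.range f).ncard ≤ Nat.card ι := by
    rw [← Set.image_univ, ← Set.ncard_univ]
    exact Set.ncard_image_le
  refine ⟨?_, fun i hi => ?_, isTree_iff_connected_and_card.2 ⟨h, ?_⟩⟩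
  · refine Set.injOn_univ.1 (Set.injOn_of_ncard_image_eq ?_)
    rw [Set.image_univ, Set.ncard_univ]
    lia
  · have hsub := Set.eq_of_subset_of_ncard_le (Set.sdiff_subset (s := Set.range f)
      (t := Sym2.diagSet)) (by lia)
    exact (hsub.symm.subset ⟨i, rfl⟩).2 hi
  · rw [hedge, Nat.card_coe_set_eq]
    lia

end TreeSequences

section MinimalFactorizations

open SimpleGraph

variable {n : ℕ}

lemma isNCycle_iff (hn : 2 ≤ n) {σ : Perm (Fin n)} :
    IsNCycle σ ↔ ∀ u v, σ.SameCycle u v := by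
  have : Nontrivial (Fin n) := Fin.nontrivial_iff_two_le.2 hn
  constructor
  · rintro ⟨hcycle, hsupp⟩ u v
    have hmoved (x : Fin n) : σ x ≠ x := Perm.mem_support.1 (hsupp ▸ mem_univ x)
    exact hcycle.sameCycle (hmoved u) (hmoved v)
  · intro h
    have hmoved (x : Fin n) : σ x ≠ x := fun hx => by
      obtain ⟨y, hy⟩ := exists_ne x
      exact hy ((h x y).eq_of_left hx).symm
    refine ⟨⟨⟨0, by lia⟩, hmoved _, fun y _ => h _ y⟩, ?_⟩
    exact eq_univ_of_forall fun x => Perm.mem_support.2 (hmoved x)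

lemma prodRev_edgeSwap_comp {m : ℕ} (f : Fin m → Sym2 (Fin n)) :
    prodRev (edgeSwap ∘ f) = ((List.ofFn f).reverse.map edgeSwap).prod := by
  rw [prodRev, ← List.map_ofFn, List.map_reverse]

theorem isNCycle_prodRev_edgeSwap_iff (hn : 2 ≤ n) {f : Fin (n - 1) → Sym2 (Fin n)} :
    IsNCycle (prodRev (edgeSwap ∘ f)) ↔ (fromEdgeSet (Set.range f)).Connected := by
  have : Nonempty (Fin n) := ⟨⟨0, by lia⟩⟩
  have hrange : {e | e ∈ (List.ofFn f).reverse} = Set.range f := by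
    ext e
    rw [Set.mem_ofPred_eq, List.mem_reverse, List.mem_ofFn, Set.mem_range]
  rw [isNCycle_iff hn, prodRev_edgeSwap_comp]
  constructor
  · exact fun h => (connected_iff _).2
      ⟨fun u v => hrange ▸ reachable_of_sameCycle_prod_edgeSwap (h u v), this⟩
  · intro h u v
    obtain ⟨hinj, hloop, htree⟩ :=
      injective_loopless_isTree_of_connected (by simp only [Nat.card_fin]; lia) h
    refine (sameCycle_prod_edgeSwap_iff ?_ ?_ ?_).2 ?_
    · exact List.nodup_reverse.2 (List.nodup_ofFn.2 hinj)
    · simpa [List.mem_ofFn] using hloop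
    · exact hrange ▸ htree.isAcyclic
    · exact hrange ▸ h.preconnected u v

lemma card_isNCycle_prodRev (hn : 2 ≤ n) :
    Nat.card {τ : Fin (n - 1) → Perm (Fin n) // (∀ i, (τ i).IsSwap) ∧ IsNCycle (prodRev τ)}
      = connectingCount (⊥ : SimpleGraph (Fin n)) (n - 1) := by
  have hloop {f : Fin (n - 1) → Sym2 (Fin n)} (hf : (fromEdgeSet (Set.range f)).Connected) :
      ∀ i, ¬(f i).IsDiag :=
    (injective_loopless_isTree_of_connected (by simp only [Nat.card_fin]; lia) hf).2.1
  simp only [connectingCount, bot_sup_eq]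
  refine (Nat.card_congr (Equiv.ofBijective (fun f => ⟨edgeSwap ∘ f.1,
    fun i => isSwap_edgeSwap (hloop f.2 i), (isNCycle_prodRev_edgeSwap_iff hn).2 f.2⟩)
    ⟨fun f g hfg => ?_, fun ⟨τ, hτ, hcycle⟩ => ?_⟩)).symm
  · refine Subtype.ext (funext fun i => ?_)
    exact edgeSwap_injOn (hloop f.2 i) (hloop g.2 i) (congrFun (Subtype.ext_iff.1 hfg) i)
  · obtain ⟨f, -, rfl⟩ := exists_eq_edgeSwap_comp hτ
    exact ⟨⟨f, (isNCycle_prodRev_edgeSwap_iff hn).1 hcycle⟩, rfl⟩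

end MinimalFactorizations

/-- (1) The number of sequences of `n-1` transpositions in `Sₙ` multiplying to an `n`-cycle
is `(n-1)!·n^{n-2}`; (2) for every labeled tree on `{1,…,n}` the product of the transpositions
of its edges in any order is an `n`-cycle; (3) conversely, every sequence of `n-1`
transpositions multiplying to an `n`-cycle consists of distinct transpositions whose
underlying graph is a tree. -/
theorem genus_zero_factorizations (n : ℕ) (hn : 2 ≤ n) :
    (Nat.card {τ : Fin (n - 1) → Equiv.Perm (Fin n) //
        (∀ i, (τ i).IsSwap) ∧ IsNCycle (prodRev τ)}
      = (n - 1).factorial * n ^ (n - 2))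
    ∧ (∀ t : SimpleGraph (Fin n), t.IsTree →
        ∀ f : Fin (n - 1) → Sym2 (Fin n), Function.Injective f →
          (∀ e, e ∈ t.edgeSet ↔ ∃ i, f i = e) →
          IsNCycle (prodRev fun i => sym2Swap (f i)))
    ∧ (∀ τ : Fin (n - 1) → Equiv.Perm (Fin n), (∀ i, (τ i).IsSwap) →
        IsNCycle (prodRev τ) →
          Function.Injective τ ∧
            (SimpleGraph.fromRel fun a b => ∃ k, τ k = Equiv.swap a b).IsTree) := by
  have : Nonempty (Fin n) := ⟨⟨0, by lia⟩⟩
  simp only [sym2Swap_eq_edgeSwap]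
  refine ⟨?_, fun t ht f _ hf => ?_, fun τ hτ hcycle => ?_⟩
  · have hcount := connectingCount_bot (V := Fin n)
    rw [Fintype.card_fin] at hcount
    exact (card_isNCycle_prodRev hn).trans hcount
  · refine (isNCycle_prodRev_edgeSwap_iff hn).2 ?_
    have hrange : Set.range f = t.edgeSet := Set.ext fun e => (hf e).symm
    rw [hrange, SimpleGraph.fromEdgeSet_edgeSet]
    exact ht.connected
  · obtain ⟨f, hloop, rfl⟩ := exists_eq_edgeSwap_comp hτ
    obtain ⟨hinj, -, htree⟩ :=
      injective_loopless_isTree_of_connected (by simp only [Nat.card_fin]; lia)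
        ((isNCycle_prodRev_edgeSwap_iff hn).1 hcycle)
    exact ⟨fun i j hij => hinj (edgeSwap_injOn (hloop i) (hloop j) hij),
      fromRel_edgeSwap_eq_swap hloop ▸ htree⟩
end

section
/- Let G be the graph with one vertex and 2g loops (one-vertex graph of valency 4g). Among its (4g-1)! embeddings into oriented surfaces (cyclic orders of the 4g half-edges), exactly (4g-1)!/(2g+1) are one-faced, i.e., the ratio of one-faced embeddings to all embeddings is 1/(2g+1) (Harer–Zagier's count of one-faced gluings of a 4g-gon... specifically of a graph with one vertex). -/
open Finset Equiv

/-! Let `N σ` be the number of full cycles `γ` for which `γ * σ` is again a full cycle. Boccara's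
formula says that, on `n + 1` points, `N σ = n! * ∫₀¹ W σ`, where `W σ` is the product of
`x ^ m - (x - 1) ^ m` over the cycle lengths `m` of `σ`.

It is proved by induction on the number of points. Deleting a point from `γ` expresses `N` of a
permutation of `Option α` that moves `none` to `s` as the sum of `N (swap y s * τ)` over the
`y ≠ s` in `α`, where `τ` is the permutation with `none` deleted. Multiplying `τ` by `swap y s`
splits the cycle of `s` or merges it with another one, and the weights `W` satisfy the same
recursion up to the derivative of `x * (x - 1) * W τ`, whose integral over `[0, 1]` vanishes.

For a fixed-point-free involution on `2 * k` points, `W = (2 * x - 1) ^ k`, with integral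
`1 / (k + 1)` for even `k` and `0` for odd `k`.
-/

section CyclePolynomial

open Polynomial

variable (R : Type*) [CommRing R]

/-- The factor `x ^ m - (x - 1) ^ m` by which a cycle of length `m` enters Boccara's formula. -/
noncomputable def cyclePoly (m : ℕ) : R[X] := X ^ m - (X - 1) ^ m

@[simp] lemma cyclePoly_zero : cyclePoly R 0 = 0 := by simp [cyclePoly]

@[simp] lemma cyclePoly_one : cyclePoly R 1 = 1 := by simp [cyclePoly]

lemma cyclePoly_mul_sub_cyclePoly_add (k m : ℕ) :
    cyclePoly R (k + 1) * cyclePoly R (m + 1) - cyclePoly R (k + m + 1) =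
      X * (X - 1) * cyclePoly R k * cyclePoly R m := by
  unfold cyclePoly
  ring

lemma derivative_cyclePoly (m : ℕ) :
    derivative (cyclePoly R m) = m * cyclePoly R (m - 1) := by
  simp only [cyclePoly, derivative_sub, derivative_pow, derivative_X, derivative_one, C_eq_natCast,
    sub_zero, mul_one]
  ring

lemma sum_cyclePoly_mul_cyclePoly (m : ℕ) :
    ∑ i ∈ range m, cyclePoly R (i + 1) * cyclePoly R (m - i) =
      (m : R[X]) * (X ^ (m + 1) + (X - 1) ^ (m + 1)) - 2 * (X * (X - 1)) * cyclePoly R m := by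
  have hgeom : ∑ i ∈ range m, (X : R[X]) ^ i * (X - 1) ^ (m - 1 - i) = cyclePoly R m := by
    have := geom_sum₂_mul (X : R[X]) (X - 1) m
    rwa [sub_sub_cancel, mul_one] at this
  have hgeom' : ∑ i ∈ range m, (X - 1 : R[X]) ^ i * X ^ (m - 1 - i) = cyclePoly R m := by
    rw [← hgeom, geom_sum₂_comm]
  have hterm : ∀ i ∈ range m, cyclePoly R (i + 1) * cyclePoly R (m - i) =
      (X ^ (m + 1) + (X - 1) ^ (m + 1)) - X * (X - 1) * (X ^ i * (X - 1) ^ (m - 1 - i))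
        - X * (X - 1) * ((X - 1) ^ i * X ^ (m - 1 - i)) := by
    intro i hi
    obtain ⟨r, rfl⟩ := Nat.exists_eq_add_of_lt (mem_range.1 hi)
    rw [show i + r + 1 - i = r + 1 by omega, show i + r + 1 - 1 - i = r by omega]
    unfold cyclePoly
    ring
  rw [sum_congr rfl hterm, sum_sub_distrib, sum_sub_distrib, ← mul_sum, ← mul_sum, hgeom, hgeom',
    sum_const, card_range, nsmul_eq_mul]
  ring

lemma derivative_X_mul_X_sub_one_mul_cyclePoly (m : ℕ) :
    derivative (X * (X - 1) * cyclePoly R (m + 1)) =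
      ((m : R[X]) + 1) * cyclePoly R (m + 2) -
        ∑ i ∈ range m, cyclePoly R (i + 1) * cyclePoly R (m - i) := by
  rw [sum_cyclePoly_mul_cyclePoly, derivative_mul, derivative_cyclePoly]
  simp only [derivative_mul, derivative_X, derivative_sub, derivative_one, Nat.add_sub_cancel,
    cyclePoly]
  push_cast
  ring

end CyclePolynomial

section FullCycle

open Equiv.Perm

variable {α β : Type*}

lemma isCycleOn_univ_iff [Finite α] {γ : Perm α} : γ.IsCycleOn Set.univ ↔
    ∀ p : α → Prop, (∀ x, p x → p (γ x)) → ∀ x y, p x → p y := by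
  constructor
  · intro h p hp x y hx
    obtain ⟨i, rfl⟩ := (h.2 (Set.mem_univ x) (Set.mem_univ y)).exists_nat_pow_eq
    induction i with
    | zero => exact hx
    | succ i ih => rw [pow_succ', Perm.mul_apply]; exact hp _ ih
  · exact fun h => ⟨Set.bijOn_univ.2 γ.bijective, fun x _ y _ =>
      h (γ.SameCycle x) (fun _ => sameCycle_apply_right.2) x y (SameCycle.refl γ x)⟩

lemma isCycleOn_univ_permCongr (f : α ≃ β) {γ : Perm α} :
    (f.permCongr γ).IsCycleOn Set.univ ↔ γ.IsCycleOn Set.univ := by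
  have zpow_permCongr (i : ℤ) : f.permCongr γ ^ i = f.permCongr (γ ^ i) :=
    (map_zpow f.permCongrHom γ i).symm
  simp [IsCycleOn, SameCycle, zpow_permCongr, Set.bijOn_univ, Equiv.bijective,
    f.symm.forall_congr_left]

/-- `Equiv.optionCongr` as a group homomorphism: a permutation of `α` acts on `Option α`,
fixing `none`. -/
def optionCongrHom (α : Type*) : Perm α →* Perm (Option α) where
  toFun := optionCongr
  map_one' := optionCongr_one
  map_mul' e f := Equiv.ext fun x => by cases x <;> rfl

@[simp] lemma optionCongrHom_none (e : Perm α) : optionCongrHom α e none = none := rfl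

@[simp] lemma optionCongrHom_some (e : Perm α) (x : α) :
    optionCongrHom α e (some x) = some (e x) := rfl

lemma not_isCycleOn_univ_optionCongrHom [Nonempty α] (e : Perm α) :
    ¬ (optionCongrHom α e).IsCycleOn Set.univ := fun h =>
  h.apply_ne Set.nontrivial_univ (Set.mem_univ none) rfl

variable [DecidableEq α]

@[simp] lemma optionCongrHom_swap (x y : α) :
    optionCongrHom α (swap x y) = swap (some x) (some y) := optionCongr_swap x y

lemma swap_mul_optionCongrHom (e : Perm α) (y : α) :
    swap none (some y) * optionCongrHom α e = optionCongrHom α e * swap none (some (e⁻¹ y)) := by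
  simp [mul_swap_eq_swap_mul]

lemma isCycleOn_univ_optionCongrHom_mul_swap [Finite α] (e : Perm α) (y : α) :
    (optionCongrHom α e * swap none (some y)).IsCycleOn Set.univ ↔ e.IsCycleOn Set.univ := by
  set δ := optionCongrHom α e * swap none (some y) with hδ
  have apply_none : δ none = some (e y) := by simp [hδ]
  have apply_some_self : δ (some y) = none := by simp [hδ]
  have apply_some_of_ne : ∀ z ≠ y, δ (some z) = some (e z) := fun z hz => by
    simp [hδ, swap_apply_of_ne_of_ne, hz]
  constructor
  · rw [isCycleOn_univ_iff, isCycleOn_univ_iff]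
    intro h p hp x z
    refine h (fun o => p (o.getD y)) ?_ (some x) (some z)
    rintro (_ | w) hw
    · simpa [apply_none] using hp y hw
    · by_cases hwy : w = y
      · simpa [hwy, apply_some_self] using hw
      · simpa [apply_some_of_ne w hwy] using hp w hw
  · intro h
    have sameCycle_some : ∀ z, δ.SameCycle (some y) (some z) := by
      refine fun z => isCycleOn_univ_iff.1 h (fun w => δ.SameCycle (some y) (some w)) ?_ y z
        (SameCycle.refl _ _)
      intro w hw
      by_cases hwy : w = y
      · rw [hwy, ← apply_none, ← apply_some_self, sameCycle_apply_right, sameCycle_apply_right]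
      · rwa [← apply_some_of_ne w hwy, sameCycle_apply_right]
    have sameCycle : ∀ o, δ.SameCycle (some y) o := by
      rintro (_ | z)
      · rw [← apply_some_self, sameCycle_apply_right]
      · exact sameCycle_some z
    exact ⟨Set.bijOn_univ.2 δ.bijective, fun o _ o' _ => (sameCycle o).symm.trans (sameCycle o')⟩

end FullCycle

section CyclePairCount

open Equiv.Perm

variable {α : Type*}

/-- Deleting the point `none` from its cycle: `o` is the preimage of `none`. This is
`Equiv.Perm.decomposeOption` conjugated by inversion, which puts the transposition on the right. -/
def permOptionEquiv (α : Type*) [DecidableEq α] : Option α × Perm α ≃ Perm (Option α) :=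
  ((Equiv.refl _).prodCongr (Equiv.inv _)).trans (decomposeOption.symm.trans (Equiv.inv _))

lemma permOptionEquiv_apply [DecidableEq α] (o : Option α) (e : Perm α) :
    permOptionEquiv α (o, e) = optionCongrHom α e * swap none o := by
  change (swap none o * optionCongrHom α e⁻¹)⁻¹ = _
  rw [mul_inv_rev, map_inv, inv_inv, swap_inv]

lemma swap_none_mul_swap_none [DecidableEq α] {y s : α} (h : y ≠ s) :
    swap none (some y) * swap none (some s) =
      optionCongrHom α (swap y s) * swap none (some y) := by
  ext1 z
  rcases z with _ | z
  · simp [swap_apply_of_ne_of_ne, h.symm]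
  · simp only [Perm.mul_apply, swap_apply_def]
    split_ifs <;> simp_all [swap_apply_of_ne_of_ne]

/-- The number of full cycles `γ` such that `γ * σ` is a full cycle. Full cycles are expressed by
`IsCycleOn Set.univ` rather than `IsCycle`, so that the identity of a one-point type counts. -/
noncomputable def cyclePairCount (σ : Perm α) : ℕ :=
  Nat.card {γ : Perm α // γ.IsCycleOn Set.univ ∧ (γ * σ).IsCycleOn Set.univ}

lemma cyclePairCount_permCongr {β : Type*} (f : α ≃ β) (σ : Perm α) :
    cyclePairCount (f.permCongr σ) = cyclePairCount σ :=
  (Nat.card_congr (f.permCongr.subtypeEquiv fun γ => by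
    rw [← permCongr_mul, isCycleOn_univ_permCongr, isCycleOn_univ_permCongr])).symm

lemma cyclePairCount_of_subsingleton [Subsingleton α] (σ : Perm α) : cyclePairCount σ = 1 := by
  simp [cyclePairCount, isCycleOn_of_subsingleton]

variable [Fintype α] [Nonempty α]

open Classical in
lemma card_isCycleOn_univ_option [DecidableEq α] (Q : Perm (Option α) → Prop) :
    Nat.card {γ : Perm (Option α) // γ.IsCycleOn Set.univ ∧ Q γ} =
      ∑ y : α, Nat.card {e : Perm α //
        e.IsCycleOn Set.univ ∧ Q (optionCongrHom α e * swap none (some y))} := by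
  simp only [Nat.card_eq_fintype_card, Fintype.card_subtype, card_filter]
  rw [← (permOptionEquiv α).sum_comp, Fintype.sum_prod_type, Fintype.sum_option]
  simp only [permOptionEquiv_apply, isCycleOn_univ_optionCongrHom_mul_swap, swap_self,
    ← Perm.one_def, mul_one, not_isCycleOn_univ_optionCongrHom, false_and, if_false,
    sum_const_zero, zero_add]

lemma cyclePairCount_optionCongrHom (τ : Perm α) :
    cyclePairCount (optionCongrHom α τ) = Fintype.card α * cyclePairCount τ := by
  classical
  have splice_mul (y : α) (e : Perm α) :
      (optionCongrHom α e * swap none (some y) * optionCongrHom α τ).IsCycleOn Set.univ ↔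
        (e * τ).IsCycleOn Set.univ := by
    rw [mul_assoc, swap_mul_optionCongrHom, ← mul_assoc, ← map_mul,
      isCycleOn_univ_optionCongrHom_mul_swap]
  simp only [cyclePairCount, card_isCycleOn_univ_option, splice_mul, sum_const, card_univ,
    smul_eq_mul]

lemma cyclePairCount_swap_mul_optionCongrHom [DecidableEq α] (τ : Perm α) (s : α) :
    cyclePairCount (swap none (some s) * optionCongrHom α τ) =
      ∑ y ∈ univ.erase s, cyclePairCount (swap y s * τ) := by
  have splice_self (e : Perm α) : ¬ (optionCongrHom α e * swap none (some s) *
      (swap none (some s) * optionCongrHom α τ)).IsCycleOn Set.univ := by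
    rw [mul_assoc, swap_mul_self_mul, ← map_mul]
    exact not_isCycleOn_univ_optionCongrHom _
  have splice_of_ne {y : α} (hy : y ≠ s) (e : Perm α) : (optionCongrHom α e * swap none (some y) *
      (swap none (some s) * optionCongrHom α τ)).IsCycleOn Set.univ ↔
        (e * (swap y s * τ)).IsCycleOn Set.univ := by
    rw [mul_assoc, ← mul_assoc (swap none (some y)), swap_none_mul_swap_none hy, mul_assoc,
      swap_mul_optionCongrHom, ← mul_assoc, ← mul_assoc, ← map_mul, ← map_mul,
      isCycleOn_univ_optionCongrHom_mul_swap, mul_assoc]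
  rw [cyclePairCount, card_isCycleOn_univ_option, ← add_sum_erase _ _ (mem_univ s)]
  simp only [splice_self, and_false, Nat.card_of_isEmpty, zero_add]
  refine sum_congr rfl fun y hy => ?_
  simp only [splice_of_ne (ne_of_mem_erase hy), cyclePairCount]

end CyclePairCount

section CycleWeight

open Equiv.Perm Polynomial

variable {α : Type*}

lemma formPerm_cons_append_cons [DecidableEq α] {s y : α} {l₁ l₂ : List α}
    (h : (s :: l₁ ++ y :: l₂).Nodup) :
    (s :: l₁ ++ y :: l₂).formPerm = swap s y * (s :: l₁).formPerm * (y :: l₂).formPerm := by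
  induction l₁ generalizing s with
  | nil => simp
  | cons a l₁ ih =>
    have hay : a ≠ y := by rintro rfl; simp at h
    have hsy : s ≠ y := by rintro rfl; simp at h
    have hswap : swap s a * swap a y = swap s y * swap s a := by
      rw [mul_swap_eq_swap_mul, swap_apply_right, swap_apply_of_ne_of_ne hsy.symm hay.symm]
    have ih' := ih h.of_cons
    simp only [List.cons_append, List.formPerm_cons_cons] at ih' ⊢
    rw [ih', ← mul_assoc, ← mul_assoc, hswap, mul_assoc (swap s y)]

lemma optionCongrHom_formPerm [DecidableEq α] (l : List α) :
    optionCongrHom α l.formPerm = (l.map some).formPerm := by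
  induction l with
  | nil => simp
  | cons a l ih =>
    cases l with
    | nil => simp
    | cons b l =>
      rw [List.formPerm_cons_cons, map_mul, ih]
      simp only [List.map_cons, List.formPerm_cons_cons, optionCongrHom_swap]

variable [Fintype α] [DecidableEq α]

lemma card_support_formPerm_cons_sub_one {a : α} {l : List α} (hl : (a :: l).Nodup) :
    #(a :: l).formPerm.support - 1 = l.length := by
  rcases l with _ | ⟨b, l⟩
  · simp
  · rw [List.support_formPerm_of_nodup _ hl (by simp), List.toFinset_card_of_nodup hl]
    simp

lemma exists_cycleOf_eq_formPerm (τ : Perm α) (s : α) : ∃ l : List α, (s :: l).Nodup ∧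
    τ.cycleOf s = (s :: l).formPerm ∧ ∀ z, z ∈ s :: l ↔ τ.SameCycle s z := by
  by_cases hs : τ s = s
  · refine ⟨[], by simp, by simpa using hs, fun z => ?_⟩
    rw [List.mem_singleton]
    exact ⟨fun h => h ▸ SameCycle.refl _ _, fun h => (h.eq_of_left hs).symm⟩
  · have hs' : s ∈ τ.support := mem_support.2 hs
    obtain ⟨a, l, hl⟩ := List.exists_cons_of_ne_nil (mt toList_eq_nil_iff.1 (not_not.2 hs'))
    obtain rfl : a = s := by simpa [hl] using toList_getElem_zero τ s hs'
    refine ⟨l, hl ▸ nodup_toList τ a, ?_, fun z => ?_⟩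
    · rw [← hl, formPerm_toList]
    · rw [← hl, mem_toList_iff, and_iff_left hs']

lemma mul_inv_cycleOf_apply {τ : Perm α} {s z : α} (h : τ.SameCycle s z) :
    (τ * (τ.cycleOf s)⁻¹) z = z := by
  rw [cycleOf_inv, Perm.mul_apply, (sameCycle_inv.2 h).cycleOf_apply]
  simp

lemma cycleOf_mul_mul_inv_cycleOf (τ : Perm α) (s : α) :
    τ.cycleOf s * (τ * (τ.cycleOf s)⁻¹) = τ := by
  by_cases hs : τ s = s
  · simp [(cycleOf_eq_one_iff τ).2 hs]
  · have hcomm : Commute (τ.cycleOf s) τ :=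
      self_mem_cycle_factors_commute (cycleOf_mem_cycleFactorsFinset_iff.2 (mem_support.2 hs))
    rw [← mul_assoc, hcomm.eq, mul_inv_cancel_right]

variable (R : Type*) [CommRing R]

/-- The weight of `τ` in Boccara's formula: the product of `cyclePoly R m` over the lengths `m` of
all cycles of `τ`. Fixed points, which `cycleType` omits, would contribute `cyclePoly R 1 = 1`. -/
noncomputable def cycleWeight (τ : Perm α) : R[X] := (τ.cycleType.map (cyclePoly R)).prod

lemma cycleWeight_one : cycleWeight R (1 : Perm α) = 1 := by simp [cycleWeight]

lemma cycleWeight_eq_prod (τ : Perm α) :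
    cycleWeight R τ = ∏ c ∈ τ.cycleFactorsFinset, cyclePoly R #c.support := by
  simp [cycleWeight, cycleType_def]

lemma cycleWeight_permCongr {β : Type*} [Fintype β] [DecidableEq β] (f : α ≃ β) (τ : Perm α) :
    cycleWeight R (f.permCongr τ) = cycleWeight R τ := by
  have permCongr_eq : f.permCongr τ =
      τ.extendDomain (f.trans (subtypeUnivEquiv (p := fun _ => True) fun _ => trivial).symm) := by
    ext1 x
    simp [extendDomain_apply_subtype]
  rw [cycleWeight, permCongr_eq, cycleType_extendDomain, cycleWeight]

lemma cycleWeight_optionCongrHom (τ : Perm α) :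
    cycleWeight R (optionCongrHom α τ) = cycleWeight R τ := by
  have optionCongrHom_eq :
      optionCongrHom α τ = τ.extendDomain (optionIsSomeEquiv α).symm := by
    ext1 x
    rcases x with _ | x
    · rw [extendDomain_apply_not_subtype _ _ (by simp), optionCongrHom_none]
    · rw [extendDomain_apply_subtype _ _ (by simp)]
      simp [optionIsSomeEquiv]
  rw [cycleWeight, optionCongrHom_eq, cycleType_extendDomain, cycleWeight]

lemma cycleWeight_formPerm_mul {a : α} {l : List α} (hl : (a :: l).Nodup) {d : Perm α}
    (hd : ∀ z ∈ a :: l, d z = z) :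
    cycleWeight R ((a :: l).formPerm * d) = cyclePoly R (l.length + 1) * cycleWeight R d := by
  have hdisj : Perm.Disjoint (a :: l).formPerm d := fun z =>
    (em (z ∈ a :: l)).symm.imp List.formPerm_apply_of_notMem (hd z)
  rw [cycleWeight, hdisj.cycleType_mul, Multiset.map_add, Multiset.prod_add, cycleWeight]
  congr 1
  rcases l with _ | ⟨b, l⟩
  · simp
  · rw [(List.isCycle_formPerm hl (by simp)).cycleType,
      List.support_formPerm_of_nodup _ hl (by simp), List.toFinset_card_of_nodup hl]
    simp

-- A fixed point `y` contributes `0`, because the truncated `0 - 1` selects `cyclePoly R 0 = 0`.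
lemma derivative_cycleWeight (τ : Perm α) : derivative (cycleWeight R τ) =
    ∑ y, cyclePoly R (#(τ.cycleOf y).support - 1) * cycleWeight R (τ * (τ.cycleOf y)⁻¹) := by
  have sum_support : ∑ y ∈ τ.support,
      cyclePoly R (#(τ.cycleOf y).support - 1) * cycleWeight R (τ * (τ.cycleOf y)⁻¹) =
      ∑ y, cyclePoly R (#(τ.cycleOf y).support - 1) * cycleWeight R (τ * (τ.cycleOf y)⁻¹) := by
    refine sum_subset (subset_univ _) fun y _ hy => ?_
    simp [(cycleOf_eq_one_iff τ).2 (notMem_support.1 hy)]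
  rw [← sum_support, ← sum_fiberwise_of_maps_to (t := τ.cycleFactorsFinset) (g := τ.cycleOf)
    fun y hy => cycleOf_mem_cycleFactorsFinset_iff.2 hy, cycleWeight_eq_prod,
    derivative_prod_finset]
  refine sum_congr rfl fun c hc => ?_
  have fiber_eq : {y ∈ τ.support | τ.cycleOf y = c} = c.support := by
    ext y
    rw [mem_filter]
    constructor
    · rintro ⟨hy, rfl⟩
      simpa using hy
    · exact fun hy => ⟨mem_cycleFactorsFinset_support_le hc hy, (cycle_is_cycleOf hy hc).symm⟩
  have term_eq : ∀ y ∈ c.support,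
      cyclePoly R (#(τ.cycleOf y).support - 1) * cycleWeight R (τ * (τ.cycleOf y)⁻¹) =
      cyclePoly R (#c.support - 1) * ∏ c' ∈ τ.cycleFactorsFinset.erase c,
        cyclePoly R #c'.support := by
    intro y hy
    rw [← cycle_is_cycleOf hy hc, cycleWeight_eq_prod,
      cycleFactorsFinset_mul_inv_mem_eq_sdiff hc, sdiff_singleton_eq_erase]
  rw [fiber_eq, sum_congr rfl term_eq, sum_const, derivative_cyclePoly, nsmul_eq_mul]
  ring

section Splice

variable {s : α} {l : List α} {d : Perm α}

lemma cycleWeight_swap_mul_formPerm_append_cons {y : α} {l' : List α}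
    (hl : (s :: l ++ y :: l').Nodup) (hd : ∀ z ∈ s :: l ++ y :: l', d z = z) :
    cycleWeight R (swap y s * ((s :: l ++ y :: l').formPerm * d)) =
      cyclePoly R (l.length + 1) * cyclePoly R (l'.length + 1) * cycleWeight R d := by
  obtain ⟨hl₁, hl₂, hdisj⟩ := List.nodup_append.1 hl
  rw [formPerm_cons_append_cons hl, swap_comm, mul_assoc, mul_assoc, swap_mul_self_mul,
    cycleWeight_formPerm_mul R hl₁, cycleWeight_formPerm_mul R hl₂, mul_assoc]
  · exact fun z hz => hd z (List.mem_append_right _ hz)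
  · intro z hz
    rw [Perm.mul_apply, hd z (List.mem_append_left _ hz)]
    exact List.formPerm_apply_of_notMem fun hz' => hdisj z hz z hz' rfl

lemma cycleWeight_swap_mul_formPerm_mul_formPerm {y : α} {l' : List α}
    (hl : (s :: l ++ y :: l').Nodup) (hd : ∀ z ∈ s :: l ++ y :: l', d z = z) :
    cycleWeight R (swap y s * ((s :: l).formPerm * ((y :: l').formPerm * d))) =
      cyclePoly R (l.length + 1 + l'.length + 1) * cycleWeight R d := by
  rw [swap_comm, ← mul_assoc, ← mul_assoc, ← formPerm_cons_append_cons hl]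
  rw [show l.length + 1 + l'.length + 1 = (l ++ y :: l').length + 1 by
    rw [List.length_append, List.length_cons]; ring]
  exact cycleWeight_formPerm_mul R hl hd

lemma sum_cycleWeight_swap_mul_of_mem (hl : (s :: l).Nodup) (hd : ∀ z ∈ s :: l, d z = z) :
    ∑ y ∈ l.toFinset, cycleWeight R (swap y s * ((s :: l).formPerm * d)) =
      (∑ i ∈ range l.length, cyclePoly R (i + 1) * cyclePoly R (l.length - i)) *
        cycleWeight R d := by
  rw [List.sum_toFinset _ hl.of_cons, ← Fin.sum_univ_fun_getElem, sum_mul, sum_range]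
  refine sum_congr rfl fun i _ => ?_
  have l_eq : s :: l = s :: l.take i ++ l[i] :: l.drop (i + 1) := by simp
  have split := cycleWeight_swap_mul_formPerm_append_cons R (d := d) (l_eq ▸ hl) (l_eq ▸ hd)
  rw [← l_eq, List.length_take_of_le i.2.le, List.length_drop,
    show l.length - (i + 1) + 1 = l.length - i by omega] at split
  exact split

lemma cycleWeight_sub_cycleWeight_swap_mul (hl : (s :: l).Nodup) (hd : ∀ z ∈ s :: l, d z = z)
    {y : α} (hy : y ∉ s :: l) :
    cyclePoly R (l.length + 2) * cycleWeight R d -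
        cycleWeight R (swap y s * ((s :: l).formPerm * d)) =
      X * (X - 1) * cyclePoly R (l.length + 1) *
        (cyclePoly R (#(d.cycleOf y).support - 1) * cycleWeight R (d * (d.cycleOf y)⁻¹)) := by
  obtain ⟨l', hl', hcycle, hmem⟩ := exists_cycleOf_eq_formPerm d y
  set e := d * (d.cycleOf y)⁻¹ with he
  have d_eq : (y :: l').formPerm * e = d := by rw [← hcycle, cycleOf_mul_mul_inv_cycleOf]
  have disj : ∀ z ∈ s :: l, z ∉ y :: l' := fun z hz hz' =>
    hy (((hmem z).1 hz').eq_of_right (hd z hz) ▸ hz)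
  have nodup : (s :: l ++ y :: l').Nodup := hl.append hl' disj
  have e_fix : ∀ z ∈ s :: l ++ y :: l', e z = z := by
    intro z hz
    rcases List.mem_append.1 hz with hz | hz
    · rw [he, hcycle, Perm.mul_apply, Perm.inv_eq_iff_eq.2
        (List.formPerm_apply_of_notMem (disj z hz)).symm, hd z hz]
    · exact mul_inv_cycleOf_apply ((hmem z).1 hz)
  have e_fix_right : ∀ z ∈ y :: l', e z = z := fun z hz => e_fix z (List.mem_append_right _ hz)
  rw [hcycle, card_support_formPerm_cons_sub_one hl', ← d_eq,
    cycleWeight_swap_mul_formPerm_mul_formPerm R nodup e_fix,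
    cycleWeight_formPerm_mul R hl' e_fix_right]
  linear_combination cycleWeight R e * cyclePoly_mul_sub_cyclePoly_add R (l.length + 1) l'.length

lemma sum_compl_cycleWeight_swap_mul (hl : (s :: l).Nodup) (hd : ∀ z ∈ s :: l, d z = z) :
    ∑ y ∈ (s :: l).toFinsetᶜ, (cyclePoly R (l.length + 2) * cycleWeight R d -
        cycleWeight R (swap y s * ((s :: l).formPerm * d))) =
      X * (X - 1) * cyclePoly R (l.length + 1) * derivative (cycleWeight R d) := by
  rw [derivative_cycleWeight, mul_sum]
  refine sum_congr_of_eq_on_inter ?_ ?_ ?_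
  · exact fun y _ hy => absurd (mem_univ y) hy
  · intro y _ hy
    have hy' : y ∈ s :: l := List.mem_toFinset.1 (by simpa only [mem_compl, not_not] using hy)
    simp [(cycleOf_eq_one_iff d).2 (hd y hy')]
  · exact fun y hy _ => cycleWeight_sub_cycleWeight_swap_mul R hl hd (by simpa using hy)

end Splice

lemma cycleWeight_swap_none_mul_optionCongrHom {s : α} {l : List α} {d : Perm α}
    (hl : (s :: l).Nodup) (hd : ∀ z ∈ s :: l, d z = z) :
    cycleWeight R (swap none (some s) * optionCongrHom α ((s :: l).formPerm * d)) =
      cyclePoly R (l.length + 2) * cycleWeight R d := by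
  have nodup : (none :: some s :: l.map some).Nodup :=
    List.nodup_cons.2 ⟨by simp, hl.map (Option.some_injective α)⟩
  have fixes : ∀ o ∈ none :: some s :: l.map some, optionCongrHom α d o = o := by
    simpa using hd
  rw [map_mul, optionCongrHom_formPerm, List.map_cons, ← mul_assoc, ← List.formPerm_cons_cons,
    cycleWeight_formPerm_mul R nodup fixes, cycleWeight_optionCongrHom]
  simp

lemma card_mul_cycleWeight_sub_sum (τ : Perm α) (s : α) :
    (Fintype.card α : R[X]) * cycleWeight R (swap none (some s) * optionCongrHom α τ) -
        ∑ y ∈ univ.erase s, cycleWeight R (swap y s * τ) =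
      derivative (X * (X - 1) * cycleWeight R τ) := by
  obtain ⟨l, hl, hcycle, hmem⟩ := exists_cycleOf_eq_formPerm τ s
  set d := τ * (τ.cycleOf s)⁻¹
  have τ_eq : τ = (s :: l).formPerm * d := by rw [← hcycle, cycleOf_mul_mul_inv_cycleOf]
  have d_fix : ∀ z ∈ s :: l, d z = z := fun z hz => mul_inv_cycleOf_apply ((hmem z).1 hz)
  have inside := sum_cycleWeight_swap_mul_of_mem R hl d_fix
  have outside := sum_compl_cycleWeight_swap_mul R hl d_fix
  have hs : s ∉ l := (List.nodup_cons.1 hl).1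
  have erase_eq : univ.erase s = l.toFinset ∪ (s :: l).toFinsetᶜ := by
    ext y
    simp only [mem_erase, mem_univ, mem_union, mem_compl, List.mem_toFinset, List.mem_cons]
    grind
  have disj : _root_.Disjoint l.toFinset (s :: l).toFinsetᶜ :=
    disjoint_compl_right.mono_left fun y hy =>
      List.mem_toFinset.2 (List.mem_cons_of_mem s (List.mem_toFinset.1 hy))
  have card_eq : (Fintype.card α : R[X]) = #(s :: l).toFinsetᶜ + (l.length + 1) := by
    rw [← card_compl_add_card (s :: l).toFinset, List.toFinset_card_of_nodup hl, List.length_cons]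
    push_cast
    rfl
  rw [sum_sub_distrib, sum_const, nsmul_eq_mul] at outside
  rw [τ_eq, cycleWeight_swap_none_mul_optionCongrHom R hl d_fix,
    cycleWeight_formPerm_mul R hl d_fix, erase_eq, sum_union disj, inside, card_eq,
    ← mul_assoc (X * (X - 1)), derivative_mul (f := X * (X - 1) * cyclePoly R (l.length + 1)),
    derivative_X_mul_X_sub_one_mul_cyclePoly]
  linear_combination outside

end CycleWeight

section Boccara

open Equiv.Perm Polynomial

lemma integral_derivative_X_mul_X_sub_one_mul (p : ℝ[X]) :
    ∫ x in (0 : ℝ)..1, (derivative (X * (X - 1) * p)).eval x = 0 := by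
  rw [intervalIntegral.integral_eq_sub_of_hasDerivAt (fun x _ => Polynomial.hasDerivAt _ x)
    ((Polynomial.continuous _).intervalIntegrable _ _)]
  simp

variable {α : Type*} [Fintype α]

lemma card_mul_integral_cycleWeight_swap_none_mul [DecidableEq α] (τ : Perm α) (s : α) :
    Fintype.card α * ∫ x in (0 : ℝ)..1,
        (cycleWeight ℝ (swap none (some s) * optionCongrHom α τ)).eval x =
      ∑ y ∈ univ.erase s, ∫ x in (0 : ℝ)..1, (cycleWeight ℝ (swap y s * τ)).eval x := by
  have integrable (p : ℝ[X]) :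
      IntervalIntegrable (fun x => p.eval x) MeasureTheory.volume 0 1 :=
    p.continuous.intervalIntegrable _ _
  have boundary := integral_derivative_X_mul_X_sub_one_mul (cycleWeight ℝ τ)
  rw [← card_mul_cycleWeight_sub_sum ℝ τ s] at boundary
  simp only [eval_sub, eval_mul, eval_natCast, eval_finsetSum] at boundary
  rw [intervalIntegral.integral_sub ((integrable _).const_mul _)
      (Continuous.intervalIntegrable (by fun_prop) _ _),
    intervalIntegral.integral_const_mul,
    intervalIntegral.integral_finsetSum fun y _ => integrable _] at boundary
  exact sub_eq_zero.1 boundary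

theorem cyclePairCount_eq_factorial_mul_integral [DecidableEq α] (n : ℕ)
    (hn : Fintype.card α = n + 1) (σ : Perm α) :
    (cyclePairCount σ : ℝ) = n.factorial * ∫ x in (0 : ℝ)..1, (cycleWeight ℝ σ).eval x := by
  induction n generalizing α with
  | zero =>
    have : Subsingleton α := Fintype.card_le_one_iff_subsingleton.1 hn.le
    simp [cyclePairCount_of_subsingleton, Subsingleton.elim σ 1, cycleWeight_one]
  | succ n ih =>
    obtain ⟨a⟩ : Nonempty α := Fintype.card_pos_iff.1 (by omega)
    have hcard : Fintype.card {x // x ≠ a} = n + 1 := by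
      rw [Fintype.card_subtype_compl, Fintype.card_subtype_eq, hn, Nat.add_sub_cancel]
    have : Nonempty {x // x ≠ a} := Fintype.card_pos_iff.1 (by omega)
    let f : α ≃ Option {x // x ≠ a} := (optionSubtypeNe a).symm
    rw [← cyclePairCount_permCongr f, ← cycleWeight_permCongr ℝ f]
    set ρ := f.permCongr σ
    have ρ_eq : ρ = swap none (ρ none) * optionCongrHom _ (removeNone ρ) :=
      (decomposeOption.symm_apply_apply ρ).symm
    rw [ρ_eq]
    rcases ρ none with _ | s
    · rw [swap_self, ← Perm.one_def, one_mul, cyclePairCount_optionCongrHom,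
        cycleWeight_optionCongrHom, Nat.cast_mul, ih hcard, hcard, Nat.factorial_succ,
        Nat.cast_mul, mul_assoc]
    · rw [cyclePairCount_swap_mul_optionCongrHom, Nat.cast_sum,
        sum_congr rfl fun y _ => ih hcard (swap y s * removeNone ρ), ← mul_sum,
        ← card_mul_integral_cycleWeight_swap_none_mul, hcard, Nat.factorial_succ, Nat.cast_mul]
      ring

lemma card_isCycleOn_univ (n : ℕ) (hn : Fintype.card α = n + 1) :
    Nat.card {γ : Perm α // γ.IsCycleOn Set.univ} = n.factorial := by
  classical
  have boccara := cyclePairCount_eq_factorial_mul_integral n hn (1 : Perm α)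
  simp only [cyclePairCount, mul_one, and_self, cycleWeight_one, eval_one,
    intervalIntegral.integral_const, sub_zero, smul_eq_mul] at boccara
  exact_mod_cast boccara

end Boccara

section Involution

open Polynomial

lemma cycleWeight_eq_pow_of_mul_self {α : Type*} [Fintype α] [DecidableEq α] (R : Type*)
    [CommRing R] {k : ℕ} (hk : Fintype.card α = 2 * k) {ι : Perm α} (hinv : ι * ι = 1)
    (hfree : ∀ x, ι x ≠ x) : cycleWeight R ι = cyclePoly R 2 ^ k := by
  have support_eq : ι.support = univ := eq_univ_of_forall fun x => Perm.mem_support.2 (hfree x)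
  obtain ⟨m, hm⟩ : ∃ m, ι.cycleType = Multiset.replicate m 2 :=
    ⟨_, Perm.cycleType_of_pow_prime_eq_one (by rw [pow_two, hinv])⟩
  have hmk : m = k := by
    have := ι.sum_cycleType
    rw [support_eq, hm, Multiset.sum_replicate, smul_eq_mul, card_univ, hk] at this
    omega
  rw [cycleWeight, hm, hmk, Multiset.map_replicate, Multiset.prod_replicate]

lemma integral_cyclePoly_two_pow (k : ℕ) :
    ∫ x in (0 : ℝ)..1, (cyclePoly ℝ 2 ^ k).eval x = if Even k then 1 / ((k : ℝ) + 1) else 0 := by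
  have eval_eq (x : ℝ) : (cyclePoly ℝ 2 ^ k).eval x = (2 * x - 1) ^ k := by
    simp only [cyclePoly, eval_pow, eval_sub, eval_X, eval_one]
    ring
  simp only [eval_eq]
  rw [intervalIntegral.integral_comp_mul_sub (fun x => x ^ k) two_ne_zero, integral_pow,
    show (2 * 0 - 1 : ℝ) = -1 by norm_num, show (2 * 1 - 1 : ℝ) = 1 by norm_num, one_pow,
    smul_eq_mul]
  split_ifs with h
  · rw [h.add_one.neg_one_pow]
    ring
  · rw [(Nat.not_even_iff_odd.1 h).add_one.neg_one_pow]
    ring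

end Involution

lemma isNCycle_iff_isCycleOn_univ {n : ℕ} (hn : 2 ≤ n) {γ : Perm (Fin n)} :
    IsNCycle γ ↔ γ.IsCycleOn Set.univ := by
  have : Nontrivial (Fin n) := Fin.nontrivial_iff_two_le.2 hn
  constructor
  · intro ⟨hγ, hsupp⟩
    have moves (x : Fin n) : γ x ≠ x := Perm.mem_support.1 (hsupp ▸ mem_univ x)
    simpa [moves] using Perm.IsCycle.isCycleOn hγ
  · intro h
    have moves (x : Fin n) : γ x ≠ x := h.apply_ne Set.nontrivial_univ (Set.mem_univ x)
    exact ⟨Perm.isCycle_iff_exists_isCycleOn.2 ⟨Set.univ, Set.nontrivial_univ, h, by simp⟩,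
      eq_univ_of_forall fun x => Perm.mem_support.2 (moves x)⟩

theorem one_vertex_graph_one_faced_embeddings_general {α : Type*} [Fintype α] [Nonempty α]
    (k : ℕ) (hk : Fintype.card α = 2 * k) (ι : Perm α) (hinv : ι * ι = 1)
    (hfree : ∀ x, ι x ≠ x) :
    Nat.card {γ : Perm α // γ.IsCycleOn Set.univ} = (2 * k - 1).factorial
    ∧ Nat.card {γ : Perm α // γ.IsCycleOn Set.univ ∧ (γ * ι).IsCycleOn Set.univ} * (k + 1)
        = if Even k then (2 * k - 1).factorial else 0 := by
  classical
  have hcard : Fintype.card α = 2 * k - 1 + 1 := by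
    have := Fintype.card_pos (α := α)
    omega
  refine ⟨card_isCycleOn_univ _ hcard, ?_⟩
  have boccara := cyclePairCount_eq_factorial_mul_integral _ hcard ι
  rw [cycleWeight_eq_pow_of_mul_self ℝ hk hinv hfree, integral_cyclePoly_two_pow] at boccara
  change cyclePairCount ι * (k + 1) = _
  have hk0 : (k : ℝ) + 1 ≠ 0 := by positivity
  split_ifs at boccara ⊢
  · field_simp at boccara
    exact_mod_cast boccara
  · simpa using boccara

/-- Harer–Zagier count for the one-vertex graph with `2g` loops: fix the loop structure as a
fixed-point-free involution `ι` on the `4g` half-edges.  An embedding is a cyclic order of the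
half-edges, i.e. a full cycle `γ`; there are `(4g-1)!` of them.  The faces are the cycles of
`γ∘ι`, so one-faced embeddings are those with `γ∘ι` a full cycle; their number is
`(4g-1)!/(2g+1)`. -/
theorem one_vertex_graph_one_faced_embeddings (g : ℕ) (hg : 1 ≤ g)
    (ι : Equiv.Perm (Fin (4 * g))) (hinv : ι * ι = 1) (hfree : ∀ x, ι x ≠ x) :
    Nat.card {γ : Equiv.Perm (Fin (4 * g)) // IsNCycle γ} = (4 * g - 1).factorial
    ∧ Nat.card {γ : Equiv.Perm (Fin (4 * g)) // IsNCycle γ ∧ IsNCycle (γ * ι)} * (2 * g + 1)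
        = (4 * g - 1).factorial := by
  have : Nonempty (Fin (4 * g)) := ⟨⟨0, by omega⟩⟩
  have hcard : 4 * g = 2 * (2 * g) := by ring
  simpa only [isNCycle_iff_isCycleOn_univ (show 2 ≤ 4 * g by omega), even_two_mul, if_true,
    ← hcard] using one_vertex_graph_one_faced_embeddings_general (2 * g) (by simp [hcard]) ι hinv
      hfree
end
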